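/- arXiv:2603.08449 — 3 statements merged into one kernel-verified Lean document; each statement's English description precedes it below -/
import Mathlib

section
/- Let 1 ≤ p < ∞, a > −1, and let φ : (0,∞) → ℂ be measurable with ∫₀^∞ |φ(t)| t^{(a+1)/p − 1} dt < ∞. Let λ ∈ ℂ lie outside the closure of { k̂_{a,p}(ξ) : ξ ∈ ℝ }. Then there exists a measurable ψ : (0,∞) → ℂ with ∫₀^∞ |ψ(t)| t^{(a+1)/p − 1} dt < ∞ such that for every holomorphic function f on 𝕌 with ‖f‖_{H^p_{|·|^a}} < ∞ the following two identities hold at every point of 𝕌: (1/λ)(g + ℋ_ψ g) = f where g = λf − ℋ_φ f, and λh − ℋ_φ h = f where h = (1/λ)(f + ℋ_ψ f). -/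
open MeasureTheory
open scoped ENNReal NNReal

/-- The upper half-plane `𝕌 = {z : Im z > 0}`. -/
def upperHalf : Set ℂ := {z : ℂ | 0 < z.im}

/-- The Hausdorff operator `ℋ_φ f(z) = ∫₀^∞ f(z/t) φ(t) t⁻¹ dt` on functions on `𝕌`. -/
noncomputable def HphiHol (φ : ℝ → ℂ) (f : ℂ → ℂ) (z : ℂ) : ℂ :=
  ∫ t in Set.Ioi (0 : ℝ), f (z / (t : ℂ)) * φ t / (t : ℂ)

/-- The power weighted Hardy norm
`‖f‖_{H^p_{|·|^a}} = sup_{y>0} (∫_ℝ |f(x+iy)|^p |x|^a dx)^{1/p}` (valued in `ℝ≥0∞`). -/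
noncomputable def hardyNorm (p a : ℝ) (f : ℂ → ℂ) : ℝ≥0∞ :=
  ⨆ y ∈ Set.Ioi (0 : ℝ),
    (∫⁻ x : ℝ, (‖f ((x : ℂ) + (y : ℂ) * Complex.I)‖₊ : ℝ≥0∞) ^ p *
      ENNReal.ofReal (|x| ^ a)) ^ (1 / p)

/-- `k̂_{a,p}(ξ) = ∫₀^∞ φ(t) t^{c − 1 − iξ} dt` with `c = (a+1)/p`. -/
noncomputable def khat (φ : ℝ → ℂ) (c : ℝ) (ξ : ℝ) : ℂ :=
  ∫ t in Set.Ioi (0 : ℝ), φ t * (t : ℂ) ^ ((c : ℂ) - 1 - Complex.I * (ξ : ℂ))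


open scoped FourierTransform Convolution

/-- `F` is the Fourier transform of an `L¹` function of norm at most `C`. -/
def WA (F : ℝ → ℂ) (C : ℝ) : Prop :=
  ∃ g : ℝ → ℂ, Integrable g ∧ 𝓕 g = F ∧ ∫ x, ‖g x‖ ≤ C

lemma wfourier_add {f g : ℝ → ℂ} (hf : Integrable f) (hg : Integrable g) :
    𝓕 (f + g) = 𝓕 f + 𝓕 g := by
  ext ξ
  simp only [Pi.add_apply, Real.fourier_eq, smul_add]
  rw [integral_add]
  · exact (Real.fourierIntegral_convergent_iff ξ).2 hf
  · exact (Real.fourierIntegral_convergent_iff ξ).2 hg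

lemma wfourier_smul (c : ℂ) (f : ℝ → ℂ) : 𝓕 (c • f) = c • 𝓕 f := by
  ext ξ
  simp only [Pi.smul_apply, Real.fourier_eq]
  rw [← integral_smul]
  congr 1; ext x
  rw [smul_comm]

lemma WA.add {F G : ℝ → ℂ} {C D : ℝ} (hF : WA F C) (hG : WA G D) : WA (F + G) (C + D) := by
  obtain ⟨f, hf, rfl, hfC⟩ := hF
  obtain ⟨g, hg, rfl, hgC⟩ := hG
  refine ⟨f + g, hf.add hg, wfourier_add hf hg, ?_⟩
  calc ∫ x, ‖(f + g) x‖ ≤ ∫ x, (‖f x‖ + ‖g x‖) :=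
        integral_mono (hf.add hg).norm (hf.norm.add hg.norm) (fun x => norm_add_le _ _)
    _ = (∫ x, ‖f x‖) + ∫ x, ‖g x‖ := integral_add hf.norm hg.norm
    _ ≤ C + D := add_le_add hfC hgC

lemma WA.smul {F : ℝ → ℂ} {C : ℝ} (hF : WA F C) (c : ℂ) : WA (c • F) (‖c‖ * C) := by
  obtain ⟨f, hf, rfl, hfC⟩ := hF
  refine ⟨c • f, hf.smul c, wfourier_smul c f, ?_⟩
  simp only [Pi.smul_apply, norm_smul]
  rw [integral_const_mul]
  gcongr

lemma WA.mono {F : ℝ → ℂ} {C D : ℝ} (hF : WA F C) (h : C ≤ D) : WA F D := by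
  obtain ⟨f, hf, h1, hfC⟩ := hF
  exact ⟨f, hf, h1, hfC.trans h⟩

lemma WA.congr {F G : ℝ → ℂ} {C : ℝ} (hF : WA F C) (h : ∀ x, F x = G x) : WA G C := by
  rwa [← (funext h : F = G)]

lemma WA.mul {F G : ℝ → ℂ} {C D : ℝ} (hF : WA F C) (hG : WA G D) : WA (F * G) (C * D) := by
  obtain ⟨f, hf, rfl, hfC⟩ := hF
  obtain ⟨g, hg, rfl, hgC⟩ := hG
  refine ⟨f ⋆[ContinuousLinearMap.mul ℂ ℂ] g, hf.integrable_convolution _ hg, ?_, ?_⟩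
  · ext ξ
    exact Real.fourier_mul_convolution_eq hf hg ξ
  · calc ∫ x, ‖(f ⋆[ContinuousLinearMap.mul ℂ ℂ] g) x‖
        ≤ ∫ x, ((fun x => ‖f x‖) ⋆[ContinuousLinearMap.mul ℝ ℝ] (fun x => ‖g x‖)) x := by
          refine integral_mono_of_nonneg (Filter.Eventually.of_forall fun x => norm_nonneg _)
            (hf.norm.integrable_convolution _ hg.norm) (Filter.Eventually.of_forall fun x => ?_)
          simp only [convolution]
          refine (norm_integral_le_integral_norm _).trans (le_of_eq ?_)
          simp
      _ = (∫ x, ‖f x‖) * ∫ x, ‖g x‖ := by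
          rw [integral_convolution _ hf.norm hg.norm]; simp
      _ ≤ C * D := by
          have h1 : 0 ≤ ∫ x, ‖f x‖ := integral_nonneg fun x => norm_nonneg _
          have h2 : 0 ≤ ∫ x, ‖g x‖ := integral_nonneg fun x => norm_nonneg _
          exact mul_le_mul hfC hgC h2 (h1.trans hfC)

lemma norm_fourier_le (g : ℝ → ℂ) (ξ : ℝ) : ‖𝓕 g ξ‖ ≤ ∫ x, ‖g x‖ := by
  rw [Real.fourier_eq]
  refine (norm_integral_le_integral_norm _).trans (le_of_eq ?_)
  simp

lemma WA.tsum {F : ℕ → ℝ → ℂ} {C : ℕ → ℝ} (h : ∀ n, WA (F n) (C n)) (hC : Summable C) :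
    ∃ g : ℝ → ℂ, Integrable g ∧ ∀ ξ, HasSum (fun n => F n ξ) (𝓕 g ξ) := by
  choose g hg hF hgC using h
  let G : ℕ → Lp ℂ 1 (volume : Measure ℝ) := fun n => (hg n).toL1
  have hGs : Summable G := by
    refine Summable.of_norm_bounded hC (fun n => ?_)
    rw [L1.norm_eq_integral_norm]
    refine le_trans (le_of_eq (integral_congr_ae ?_)) (hgC n)
    filter_upwards [(hg n).coeFn_toL1] with x hx
    simp only [G, hx]
  refine ⟨(∑' n, G n : Lp ℂ 1 (volume : Measure ℝ)), L1.integrable_coeFn _, fun ξ => ?_⟩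
  let T : Lp ℂ 1 (volume : Measure ℝ) →L[ℂ] ℂ := LinearMap.mkContinuous
    { toFun := fun u => 𝓕 (u : ℝ → ℂ) ξ
      map_add' := fun u v => by
        have := congrFun (wfourier_add (L1.integrable_coeFn u) (L1.integrable_coeFn v)) ξ
        rw [Pi.add_apply] at this
        rw [← this]
        simp only [Real.fourier_eq]
        refine integral_congr_ae ?_
        filter_upwards [Lp.coeFn_add u v] with x hx
        rw [hx]
      map_smul' := fun c u => by
        have := congrFun (wfourier_smul c (u : ℝ → ℂ)) ξ
        rw [Pi.smul_apply] at this
        rw [RingHom.id_apply, ← this]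
        simp only [Real.fourier_eq]
        refine integral_congr_ae ?_
        filter_upwards [Lp.coeFn_smul c u] with x hx
        rw [hx] } 1 (fun u => by
          rw [one_mul, L1.norm_eq_integral_norm]
          exact norm_fourier_le _ _)
  have := hGs.hasSum.mapL T
  have h2 : (fun n => F n ξ) = fun n => T (G n) := by
    funext n
    rw [← hF n]
    change _ = 𝓕 (G n : ℝ → ℂ) ξ
    simp only [Real.fourier_eq]
    refine integral_congr_ae ?_
    filter_upwards [(hg n).coeFn_toL1] with x hx
    simp only [G, hx]
  rw [h2]
  exact this

lemma fourier_eq_zero {g : ℝ → ℂ} (hg : Integrable g) (h : ∀ ξ, 𝓕 g ξ = 0) :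
    ∀ᵐ x, g x = 0 := by
  refine ae_eq_zero_of_integral_contDiff_smul_eq_zero hg.locallyIntegrable ?_
  intro u hu hus
  have hu' : ContDiff ℝ (⊤ : ℕ∞) (fun x => (u x : ℂ)) := Complex.ofRealCLM.contDiff.comp hu
  have hus' : HasCompactSupport (fun x => (u x : ℂ)) := hus.comp_left (g := Complex.ofReal) rfl
  let s : SchwartzMap ℝ ℂ := hus'.toSchwartzMap hu'
  let r : SchwartzMap ℝ ℂ := 𝓕⁻ s
  have hr : 𝓕 r = s := FourierTransform.fourier_fourierInv_eq s
  have key : ∫ ξ, 𝓕 g ξ * r ξ = ∫ x, g x * 𝓕 (r : ℝ → ℂ) x := by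
    simpa using! VectorFourier.integral_bilin_fourierIntegral_eq_flip
      (ContinuousLinearMap.mul ℂ ℂ) (L := innerₗ ℝ)
      Real.continuous_fourierChar continuous_inner hg r.integrable
  have h2 : 𝓕 (r : ℝ → ℂ) = s := by rw [← SchwartzMap.fourier_coe, hr]
  rw [h2] at key
  simp only [h, zero_mul, integral_zero] at key
  rw [key]
  congr 1; ext x
  simp [s, mul_comm]

lemma WA_of_smooth {F F' F'' : ℝ → ℂ} (h1 : ∀ x, HasDerivAt F (F' x) x)
    (h2 : ∀ x, HasDerivAt F' (F'' x) x) (hF : Integrable F) (hF' : Integrable F')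
    (hF'' : Integrable F'') :
    WA F (Real.pi * ((∫ x, ‖F x‖) + ∫ x, ‖F'' x‖)) := by
  have d1 : deriv F = F' := funext fun x => (h1 x).deriv
  have d2 : deriv F' = F'' := funext fun x => (h2 x).deriv
  have e1 := Real.fourier_deriv hF (fun x => (h1 x).differentiableAt) (by rwa [d1])
  have e2 := Real.fourier_deriv hF' (fun x => (h2 x).differentiableAt) (by rwa [d2])
  rw [d1] at e1
  rw [d2, e1] at e2
  set A := ∫ x, ‖F x‖
  set B := ∫ x, ‖F'' x‖
  have hA : 0 ≤ A := integral_nonneg fun x => norm_nonneg _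
  have hb : ∀ x, ‖𝓕 F x‖ ≤ (A + B) * (1 + x ^ 2)⁻¹ := by
    intro x
    have b1 : ‖𝓕 F x‖ ≤ A := norm_fourier_le F x
    have b2 : ‖𝓕 F'' x‖ ≤ B := norm_fourier_le F'' x
    rw [e2] at b2
    simp only [smul_eq_mul, norm_mul, Complex.norm_real, Complex.norm_I, mul_one,
      Complex.norm_ofNat, Real.norm_eq_abs, abs_of_pos Real.pi_pos] at b2
    have b3 : x ^ 2 * ‖𝓕 F x‖ ≤ B := by
      refine le_trans ?_ b2
      rw [← sq_abs x]
      have : (1:ℝ) ≤ (2 * Real.pi) * (2 * Real.pi) := by nlinarith [Real.pi_gt_three]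
      have h0 : 0 ≤ |x| ^ 2 * ‖𝓕 F x‖ := by positivity
      nlinarith
    rw [← div_eq_mul_inv, le_div_iff₀ (by positivity)]
    linarith
  have hcont : Continuous F := continuous_iff_continuousAt.2 fun x => (h1 x).continuousAt
  have hFc : Continuous (𝓕 F) := by
    exact VectorFourier.fourierIntegral_continuous Real.continuous_fourierChar
      (by exact continuous_inner) hF
  have hInt : Integrable (fun x : ℝ => (A + B) * (1 + x ^ 2)⁻¹) :=
    integrable_inv_one_add_sq.const_mul _
  have hFi : Integrable (𝓕 F) := hInt.mono' hFc.aestronglyMeasurable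
    (Filter.Eventually.of_forall hb)
  have hinv : 𝓕⁻ F = fun x => 𝓕 F (-x) := by
    ext x; exact Real.fourierInv_eq_fourier_neg F x
  refine ⟨𝓕⁻ F, ?_, hcont.fourier_fourierInv_eq hF hFi, ?_⟩
  · rw [hinv]; exact hFi.comp_neg
  · rw [hinv, integral_neg_eq_self (fun x => ‖𝓕 F x‖)]
    calc ∫ x, ‖𝓕 F x‖ ≤ ∫ x : ℝ, (A + B) * (1 + x ^ 2)⁻¹ :=
          integral_mono hFi.norm hInt hb
      _ = Real.pi * (A + B) := by
          rw [integral_const_mul, integral_univ_inv_one_add_sq, mul_comm]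

/-- The key estimate: `w v^m` with `w` Schwartz and `v = 1/(l-w)`. -/
lemma WA_schwartz (w : SchwartzMap ℝ ℂ) (l : ℂ) (V : ℝ) (hV : 0 < V)
    (hw : ∀ x, 1 ≤ V * ‖l - w x‖) :
    ∃ C : ℝ, 0 ≤ C ∧ ∀ n : ℕ, 
      WA (fun x => w x * ((l - w x)⁻¹) ^ (n + 1)) (C * ((n : ℝ) + 1) ^ 2 * V ^ (n + 1)) := by
  let w1 : SchwartzMap ℝ ℂ := SchwartzMap.derivCLM ℂ ℂ w
  let w2 : SchwartzMap ℝ ℂ := SchwartzMap.derivCLM ℂ ℂ w1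
  have hd1 : ∀ x, HasDerivAt w (w1 x) x := fun x => by
    have := w.differentiableAt (x := x) |>.hasDerivAt
    simpa [w1] using this
  have hd2 : ∀ x, HasDerivAt w1 (w2 x) x := fun x => by
    have := w1.differentiableAt (x := x) |>.hasDerivAt
    simpa [w2] using this
  have hne : ∀ x, l - w x ≠ 0 := fun x h => by
    have := hw x; rw [h] at this; simp at this; linarith
  let v : ℝ → ℂ := fun x => (l - w x)⁻¹
  have hvb : ∀ x, ‖v x‖ ≤ V := fun x => by
    simp only [v, norm_inv]
    rw [inv_le_iff_one_le_mul₀ (norm_pos_iff.2 (hne x))]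
    exact hw x
  have hvc : Continuous v := (continuous_const.sub w.continuous).inv₀ hne
  have hvd : ∀ x, HasDerivAt v (w1 x * v x ^ 2) x := fun x => by
    have := ((hasDerivAt_const x l).sub (hd1 x)).inv (hne x)
    convert! this using 1
    simp only [v]; simp [div_eq_mul_inv]
  obtain ⟨K1, hK1⟩ : ∃ K, ∀ x, ‖w1 x‖ ≤ K := ⟨_, fun x => (w1.norm_le_seminorm ℂ x)⟩
  have hK1' : 0 ≤ K1 := (norm_nonneg _).trans (hK1 0)
  obtain ⟨K0, hK0⟩ : ∃ K, ∀ x, ‖w x‖ ≤ K := ⟨_, fun x => (w.norm_le_seminorm ℂ x)⟩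
  have hK0' : 0 ≤ K0 := (norm_nonneg _).trans (hK0 0)
  -- dominating function
  let D : ℝ → ℝ := fun x => ‖w2 x‖ + (2 * K1 * ‖w1 x‖ + K0 * ‖w2 x‖) * V +
    2 * (K1 * K1 * ‖w x‖) * V ^ 2
  have hD : Integrable D := by
    have i0 := w.integrable (μ := volume) |>.norm
    have i1 := w1.integrable (μ := volume) |>.norm
    have i2 := w2.integrable (μ := volume) |>.norm
    exact (i2.add (((i1.const_mul _).add (i2.const_mul _)).mul_const _)).add
      (((i0.const_mul _).const_mul _).mul_const _)
  let E : ℝ → ℝ := fun x => ‖w1 x‖ + K1 * ‖w x‖ * V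
  have hE : Integrable E := by
    have i0 := w.integrable (μ := volume) |>.norm
    have i1 := w1.integrable (μ := volume) |>.norm
    exact i1.add ((i0.const_mul _).mul_const _)
  have i0 := w.integrable (μ := volume) |>.norm
  have hD0 : 0 ≤ ∫ x, D x := integral_nonneg fun x => by positivity
  have hw0 : 0 ≤ ∫ x, ‖w x‖ := integral_nonneg fun x => by positivity
  refine ⟨Real.pi * ((∫ x, ‖w x‖) + ∫ x, D x), by positivity, fun n => ?_⟩
  let F : ℝ → ℂ := fun x => w x * v x ^ (n + 1)
  let F' : ℝ → ℂ := fun x => w1 x * v x ^ (n + 1) + (n + 1) * (w x * w1 x) * v x ^ (n + 2)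
  let F'' : ℝ → ℂ := fun x => w2 x * v x ^ (n + 1) +
    (n + 1) * (2 * w1 x * w1 x + w x * w2 x) * v x ^ (n + 2) +
    (n + 1) * (n + 2) * (w x * w1 x * w1 x) * v x ^ (n + 3)
  have hF1 : ∀ x, HasDerivAt F (F' x) x := fun x => by
    have := (hd1 x).mul ((hvd x).pow (n + 1))
    convert! this using 1
    simp [F']; ring
  have hF2 : ∀ x, HasDerivAt F' (F'' x) x := fun x => by
    have := ((hd2 x).mul ((hvd x).pow (n + 1))).add
      ((((hd1 x).mul (hd2 x)).const_mul ((n : ℂ) + 1)).mul ((hvd x).pow (n + 2)))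
    convert! this using 1
    simp [F'']; ring
  have hvp : ∀ k x, ‖v x ^ k‖ ≤ V ^ k := fun k x => by
    rw [norm_pow]; exact pow_le_pow_left₀ (norm_nonneg _) (hvb x) k
  have cF : Continuous F := continuous_iff_continuousAt.2 fun x => (hF1 x).continuousAt
  have cF' : Continuous F' := continuous_iff_continuousAt.2 fun x => (hF2 x).continuousAt
  have cF'' : Continuous F'' := by
    have := w.continuous; have := w1.continuous; have := w2.continuous
    fun_prop
  have bF : ∀ x, ‖F x‖ ≤ V ^ (n + 1) * ‖w x‖ := fun x => by
    simp only [F]; rw [norm_mul, mul_comm]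
    gcongr; exact hvp _ _
  have hn1 : ‖(n : ℂ) + 1‖ = (n : ℝ) + 1 := by
    have : ((n : ℂ) + 1) = ((n + 1 : ℕ) : ℂ) := by push_cast; ring
    rw [this, Complex.norm_natCast]; push_cast; ring
  have hn2 : ‖(n : ℂ) + 2‖ = (n : ℝ) + 2 := by
    have : ((n : ℂ) + 2) = ((n + 2 : ℕ) : ℂ) := by push_cast; ring
    rw [this, Complex.norm_natCast]; push_cast; ring
  have bF' : ∀ x, ‖F' x‖ ≤ ((n : ℝ) + 1) * V ^ (n + 1) * E x := fun x => by
    calc ‖F' x‖ ≤ ‖w1 x‖ * V ^ (n + 1) + (n + 1) * (‖w x‖ * K1) * V ^ (n + 2) := by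
          refine (norm_add_le _ _).trans ?_
          rw [norm_mul, norm_mul, norm_mul, norm_mul, hn1]
          gcongr
          · exact hvp _ _
          · exact hK1 x
          · exact hvp _ _
      _ = V ^ (n + 1) * (‖w1 x‖ + (n + 1) * (K1 * ‖w x‖ * V)) := by ring
      _ ≤ V ^ (n + 1) * (((n : ℝ) + 1) * ‖w1 x‖ + (n + 1) * (K1 * ‖w x‖ * V)) := by
          gcongr
          have : (0 : ℝ) ≤ n * ‖w1 x‖ := by positivity
          linarith
      _ = _ := by simp only [E]; ring
  have bF'' : ∀ x, ‖F'' x‖ ≤ ((n : ℝ) + 1) ^ 2 * V ^ (n + 1) * D x := fun x => by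
    calc ‖F'' x‖ ≤ ‖w2 x‖ * V ^ (n + 1) +
          (n + 1) * (2 * K1 * ‖w1 x‖ + K0 * ‖w2 x‖) * V ^ (n + 2) +
          (n + 1) * (n + 2) * (‖w x‖ * K1 * K1) * V ^ (n + 3) := by
          refine (norm_add₃_le).trans ?_
          rw [norm_mul, norm_mul, norm_mul, norm_mul, norm_mul, norm_mul, norm_mul, norm_mul,
            hn1, hn2]
          have e : ‖2 * w1 x * w1 x + w x * w2 x‖ ≤ 2 * K1 * ‖w1 x‖ + K0 * ‖w2 x‖ := by
            refine (norm_add_le _ _).trans ?_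
            rw [norm_mul, norm_mul, norm_mul, Complex.norm_ofNat]
            gcongr
            · exact hK1 x
            · exact hK0 x
          gcongr
          · exact hvp _ _
          · exact hvp _ _
          · exact hK1 x
          · exact hK1 x
          · exact hvp _ _
      _ = V ^ (n + 1) * (1 * ‖w2 x‖ + (n + 1) * ((2 * K1 * ‖w1 x‖ + K0 * ‖w2 x‖) * V) +
          ((n + 1) * (n + 2)) * ((K1 * K1 * ‖w x‖) * V ^ 2)) := by ring
      _ ≤ V ^ (n + 1) * (((n : ℝ) + 1) ^ 2 * ‖w2 x‖ +
          ((n : ℝ) + 1) ^ 2 * ((2 * K1 * ‖w1 x‖ + K0 * ‖w2 x‖) * V) +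
          (((n : ℝ) + 1) ^ 2 * 2) * ((K1 * K1 * ‖w x‖) * V ^ 2)) := by
          have hn : (0 : ℝ) ≤ n := Nat.cast_nonneg n
          refine mul_le_mul_of_nonneg_left (add_le_add (add_le_add
            (mul_le_mul_of_nonneg_right ?_ (by positivity))
            (mul_le_mul_of_nonneg_right ?_ (by positivity)))
            (mul_le_mul_of_nonneg_right ?_ (by positivity))) (by positivity) <;> nlinarith
      _ = _ := by simp only [D]; ring
  have iF : Integrable F := (i0.const_mul _).mono' cF.aestronglyMeasurable
    (Filter.Eventually.of_forall bF)
  have iF' : Integrable F' := (hE.const_mul _).mono' cF'.aestronglyMeasurable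
    (Filter.Eventually.of_forall bF')
  have iF'' : Integrable F'' := (hD.const_mul _).mono' cF''.aestronglyMeasurable
    (Filter.Eventually.of_forall bF'')
  refine (WA_of_smooth hF1 hF2 iF iF' iF'').mono ?_
  have q1 : ∫ x, ‖F x‖ ≤ ((n : ℝ) + 1) ^ 2 * V ^ (n + 1) * ∫ x, ‖w x‖ := by
    rw [← integral_const_mul]
    refine integral_mono iF.norm (i0.const_mul _) fun x => (bF x).trans ?_
    have hn : (0 : ℝ) ≤ n := Nat.cast_nonneg n
    have : (1 : ℝ) ≤ ((n : ℝ) + 1) ^ 2 := by nlinarith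
    have h0 : 0 ≤ V ^ (n + 1) * ‖w x‖ := by positivity
    nlinarith
  have q2 : ∫ x, ‖F'' x‖ ≤ ((n : ℝ) + 1) ^ 2 * V ^ (n + 1) * ∫ x, D x := by
    rw [← integral_const_mul]
    exact integral_mono iF''.norm (hD.const_mul _) bF''
  have := Real.pi_pos
  calc Real.pi * ((∫ x, ‖F x‖) + ∫ x, ‖F'' x‖) ≤
      Real.pi * (((n : ℝ) + 1) ^ 2 * V ^ (n + 1) * (∫ x, ‖w x‖) + 
        ((n : ℝ) + 1) ^ 2 * V ^ (n + 1) * ∫ x, D x) := by gcongr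
    _ = _ := by ring

lemma exists_schwartz_approx {k : ℝ → ℂ} (hk : Integrable k) {ε : ℝ} (hε : 0 < ε) :
    ∃ u : SchwartzMap ℝ ℂ, ∫ x, ‖k x - u x‖ < ε := by
  have : Fact ((1 : ℝ≥0∞) ≤ 1) := ⟨le_rfl⟩
  have hd := SchwartzMap.denseRange_toLpCLM (E := ℝ) (F := ℂ) (p := 1) (μ := volume)
    ENNReal.one_ne_top
  obtain ⟨u, hu⟩ := hd.exists_dist_lt hk.toL1 hε
  refine ⟨u, lt_of_le_of_lt (le_of_eq ?_) hu⟩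
  rw [dist_eq_norm, L1.norm_eq_integral_norm]
  refine integral_congr_ae ?_
  filter_upwards [hk.coeFn_toL1, u.coeFn_toLp 1 volume,
    Lp.coeFn_sub hk.toL1 (SchwartzMap.toLpCLM ℝ ℂ 1 volume u)] with x h1 h2 h3
  rw [h3, Pi.sub_apply, h1]
  simp only [SchwartzMap.toLpCLM_apply, h2]

/-- Wiener's lemma for `L¹(ℝ)`. -/
lemma wiener {k : ℝ → ℂ} (hk : Integrable k) (l : ℂ) (δ : ℝ) (hδ : 0 < δ)
    (hl : ∀ ξ, δ ≤ ‖l - 𝓕 k ξ‖) :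
    l ≠ 0 ∧ ∃ q : ℝ → ℂ, Integrable q ∧
      ∀ᵐ x, l * q x = k x + (q ⋆[ContinuousLinearMap.mul ℂ ℂ] k) x := by
  obtain ⟨u, hu⟩ := exists_schwartz_approx hk (show 0 < δ / 3 by positivity)
  let w : SchwartzMap ℝ ℂ := 𝓕 u
  have hwu : ∀ ξ, w ξ = 𝓕 (u : ℝ → ℂ) ξ := fun ξ => by
    rw [← SchwartzMap.fourier_coe]
  let ε := ∫ x, ‖k x - u x‖
  have hε0 : 0 ≤ ε := integral_nonneg fun x => norm_nonneg _
  have hε : ε < δ / 3 := hu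
  let e : ℝ → ℂ := fun ξ => 𝓕 k ξ - w ξ
  have hki : Integrable (fun x => k x - u x) := hk.sub u.integrable
  have heW : WA e ε := by
    refine ⟨fun x => k x - u x, hki, ?_, le_rfl⟩
    have h1 := wfourier_add hki (u.integrable (μ := volume))
    have h2 : (fun x => k x - u x) + (u : ℝ → ℂ) = k := by ext x; simp
    rw [h2] at h1
    ext ξ
    simp only [e, hwu, h1, Pi.add_apply]; ring
  have heb : ∀ ξ, ‖e ξ‖ ≤ ε := fun ξ => by
    obtain ⟨g, hg, hge, hgC⟩ := heW
    rw [← hge]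
    exact (norm_fourier_le g ξ).trans hgC
  let η := 2 * δ / 3
  have hη : 0 < η := by simp only [η]; positivity
  have hlw : ∀ ξ, η ≤ ‖l - w ξ‖ := fun ξ => by
    have h1 : l - 𝓕 k ξ = (l - w ξ) - e ξ := by simp only [e]; ring
    have h2 := hl ξ
    rw [h1] at h2
    have h3 := (norm_sub_le (l - w ξ) (e ξ))
    have := heb ξ
    simp only [η]; linarith
  have hlη : η ≤ ‖l‖ := by
    have h1 : Filter.Tendsto (fun ξ => ‖l - w ξ‖) (Filter.cocompact ℝ) (nhds ‖l - 0‖) := by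
      refine (tendsto_const_nhds.sub ?_).norm
      have := Real.zero_at_infty_fourier (u : ℝ → ℂ)
      exact this.congr fun ξ => (hwu ξ).symm
    rw [sub_zero] at h1
    exact ge_of_tendsto' h1 hlw
  have hl0 : l ≠ 0 := norm_pos_iff.1 (hη.trans_le hlη)
  refine ⟨hl0, ?_⟩
  let V := η⁻¹
  have hV : 0 < V := inv_pos.2 hη
  have hVw : ∀ ξ, 1 ≤ V * ‖l - w ξ‖ := fun ξ => by
    simp only [V]
    rw [← div_eq_inv_mul, le_div_iff₀ hη, one_mul]; exact hlw ξ
  have hlV : ‖l⁻¹‖ ≤ V := by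
    rw [norm_inv]; exact inv_anti₀ hη hlη
  obtain ⟨C, hC, hW⟩ := WA_schwartz w l V hV hVw
  let v : ℝ → ℂ := fun ξ => (l - w ξ)⁻¹
  have hne : ∀ ξ, l - w ξ ≠ 0 := fun ξ => norm_pos_iff.1 (hη.trans_le (hlw ξ))
  have hv : ∀ ξ, v ξ = l⁻¹ * (1 + w ξ * v ξ) := fun ξ => by
    simp only [v]; have := hne ξ; field_simp; ring
  -- powers of e
  have hep : ∀ n : ℕ, WA (fun ξ => e ξ ^ (n + 1)) (ε ^ (n + 1)) := by
    intro n
    induction n with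
    | zero => simpa using heW
    | succ n ih =>
      refine ((ih.mul heW).congr fun ξ => ?_).mono (le_of_eq ?_)
      · simp only [Pi.mul_apply]; ring
      · ring
  -- e^n v^n
  have hev : ∀ n : ℕ, WA (fun ξ => (e ξ * v ξ) ^ (n + 1))
      ((ε * V) ^ (n + 1) * (1 + C * V * ((n : ℝ) + 1) ^ 3)) := by
    intro n
    induction n with
    | zero =>
      refine (((heW.add (heW.mul (hW 0))).smul l⁻¹).congr fun ξ => ?_).mono ?_
      · simp only [Pi.add_apply, Pi.mul_apply, Pi.smul_apply, smul_eq_mul]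
        conv_rhs => rw [hv ξ]
        simp only [v]; ring
      · calc ‖l⁻¹‖ * (ε + ε * (C * (((0:ℕ) : ℝ) + 1) ^ 2 * V ^ (0 + 1))) ≤
            V * (ε + ε * (C * (((0:ℕ) : ℝ) + 1) ^ 2 * V ^ (0 + 1))) := by gcongr
          _ = _ := by push_cast; ring
    | succ n ih =>
      refine ((((heW.mul ih).add ((hep (n + 1)).mul (hW (n + 1)))).smul l⁻¹).congr
        fun ξ => ?_).mono ?_
      · simp only [Pi.add_apply, Pi.mul_apply, Pi.smul_apply, smul_eq_mul]
        have h1 : (e ξ * v ξ) ^ (n + 1 + 1) = e ξ * (e ξ * v ξ) ^ (n + 1) * v ξ := by ring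
        rw [h1]
        conv_rhs => rw [show e ξ * (e ξ * v ξ) ^ (n + 1) * v ξ =
          e ξ * (e ξ * v ξ) ^ (n + 1) * (l⁻¹ * (1 + w ξ * v ξ)) by rw [← hv ξ]]
        simp only [v]; ring
      · set a := ε * ((ε * V) ^ (n + 1) * (1 + C * V * ((n : ℝ) + 1) ^ 3)) +
          ε ^ (n + 1 + 1) * (C * (((n + 1 : ℕ) : ℝ) + 1) ^ 2 * V ^ (n + 1 + 1))
        calc ‖l⁻¹‖ * a ≤ V * a := by gcongr
          _ = (ε * V) ^ (n + 1 + 1) * (1 + C * V * (((n : ℝ) + 1) ^ 3 + ((n : ℝ) + 2) ^ 2)) := by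
              simp only [a]; push_cast; ring
          _ ≤ _ := by
              have hn : (0 : ℝ) ≤ n := Nat.cast_nonneg n
              gcongr
              push_cast
              nlinarith [pow_nonneg hn 3]
  -- first series
  have hew : ∀ n : ℕ, WA (fun ξ => e ξ ^ n * (w ξ * v ξ ^ (n + 1)))
      (ε ^ n * (C * ((n : ℝ) + 1) ^ 2 * V ^ (n + 1))) := by
    intro n
    cases n with
    | zero => 
      refine ((hW 0).congr fun ξ => ?_).mono (le_of_eq ?_)
      · simp [v]
      · simp
    | succ n =>
      exact ((hep n).mul (hW (n + 1))).congr fun ξ => rfl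
  have hr : ε * V < 1 := by
    simp only [V]
    rw [← div_eq_mul_inv, div_lt_one hη]
    simp only [η]; linarith
  have hr0 : 0 ≤ ε * V := by positivity
  have hrn : ‖ε * V‖ < 1 := by rwa [Real.norm_of_nonneg hr0]
  have hsp : ∀ j : ℕ, Summable fun n : ℕ => ((n : ℝ) + 1) ^ j * (ε * V) ^ (n + 1) := by
    intro j
    have := summable_pow_mul_geometric_of_norm_lt_one j hrn
    have h2 := (summable_nat_add_iff 1).2 this
    simpa using h2
  obtain ⟨g2, hg2, hs2⟩ := WA.tsum hev (by
    refine ((hsp 0).add ((hsp 3).mul_left (C * V))).congr fun n => ?_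
    ring)
  have hsp0 : Summable fun n : ℕ => ((n : ℝ) + 1) ^ 2 * (ε * V) ^ n := by
    have h0 := summable_pow_mul_geometric_of_norm_lt_one 0 hrn
    have h1 := summable_pow_mul_geometric_of_norm_lt_one 1 hrn
    have h2 := summable_pow_mul_geometric_of_norm_lt_one 2 hrn
    refine (h2.add ((h1.mul_left 2).add h0)).congr fun n => ?_
    ring
  obtain ⟨g1, hg1, hs1⟩ := WA.tsum hew (by
    refine (hsp0.mul_left (C * V)).congr fun n => ?_
    ring)
  let q := g1 + g2
  have hq : Integrable q := hg1.add hg2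
  have hqF : ∀ ξ, 𝓕 q ξ * (l - 𝓕 k ξ) = 𝓕 k ξ := by
    intro ξ
    have hvV : ‖v ξ‖ ≤ V := by
      simp only [v, norm_inv]
      exact inv_anti₀ hη (hlw ξ)
    have hlt : ‖e ξ * v ξ‖ < 1 := by
      rw [norm_mul]
      exact lt_of_le_of_lt (mul_le_mul (heb ξ) hvV (norm_nonneg _) hε0) hr
    have hgeo := hasSum_geometric_of_norm_lt_one hlt
    have t1 := (hgeo.mul_left (w ξ * v ξ))
    have t2 := (hgeo.mul_left (e ξ * v ξ))
    have u1 : 𝓕 g1 ξ = w ξ * v ξ * (1 - e ξ * v ξ)⁻¹ := by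
      refine (hs1 ξ).unique ?_
      rw [show (fun n : ℕ => e ξ ^ n * (w ξ * v ξ ^ (n + 1))) =
        fun n => w ξ * v ξ * (e ξ * v ξ) ^ n from funext fun n => by ring]
      exact t1
    have u2 : 𝓕 g2 ξ = e ξ * v ξ * (1 - e ξ * v ξ)⁻¹ := by
      refine (hs2 ξ).unique ?_
      rw [show (fun n : ℕ => (e ξ * v ξ) ^ (n + 1)) =
        fun n => e ξ * v ξ * (e ξ * v ξ) ^ n from funext fun n => by ring]
      exact t2
    have h3 : 1 - e ξ * v ξ ≠ 0 := by
      intro h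
      have : e ξ * v ξ = 1 := by linear_combination -h
      rw [this] at hlt; simp at hlt
    have h4 : l - 𝓕 k ξ = (l - w ξ) * (1 - e ξ * v ξ) := by
      have h5 : (l - w ξ) * v ξ = 1 := mul_inv_cancel₀ (hne ξ)
      have : (l - w ξ) * (1 - e ξ * v ξ) = (l - w ξ) - e ξ * ((l - w ξ) * v ξ) := by ring
      rw [this, h5]; simp only [e]; ring
    have h5 : (l - w ξ) * v ξ = 1 := mul_inv_cancel₀ (hne ξ)
    simp only [q]
    rw [wfourier_add hg1 hg2, Pi.add_apply, u1, u2, h4]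
    calc _ = (w ξ + e ξ) * ((l - w ξ) * v ξ) * ((1 - e ξ * v ξ)⁻¹ * (1 - e ξ * v ξ)) := by ring
      _ = _ := by rw [h5, inv_mul_cancel₀ h3]; simp only [e]; ring
  refine ⟨q, hq, ?_⟩
  have hqk : Integrable (q ⋆[ContinuousLinearMap.mul ℂ ℂ] k) := hq.integrable_convolution _ hk
  have hz := fourier_eq_zero (g := l • q + (-1 : ℂ) • (k + (q ⋆[ContinuousLinearMap.mul ℂ ℂ] k)))
    ((hq.smul l).add ((hk.add hqk).smul _)) (by
      intro ξ
      rw [wfourier_add (hq.smul l) ((hk.add hqk).smul _), wfourier_smul, wfourier_smul,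
        wfourier_add hk hqk]
      simp only [Pi.add_apply, Pi.smul_apply, smul_eq_mul]
      rw [Real.fourier_mul_convolution_eq hq hk]
      linear_combination hqF ξ)
  filter_upwards [hz] with x hx
  simp only [Pi.add_apply, Pi.smul_apply, smul_eq_mul] at hx
  linear_combination hx

lemma isOpen_upperHalf : IsOpen upperHalf := isOpen_lt continuous_const Complex.continuous_im

lemma circle_bound {f : ℂ → ℂ} {z : ℂ} {R r : ℝ} (hr : 0 < r) (hrR : r < R)
    (hf : DifferentiableOn ℂ f (Metric.ball z R)) :
    ENNReal.ofReal (2 * Real.pi) * ‖f z‖ₑ ≤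
      ∫⁻ θ in Set.Ioo (-Real.pi) Real.pi, ‖f (z + Complex.polarCoord.symm (r, θ))‖ₑ := by
  have hpi := Real.pi_pos
  have hd : DiffContOnCl ℂ f (Metric.ball z |r|) := by
    rw [abs_of_pos hr]
    refine DifferentiableOn.diffContOnCl ?_
    refine hf.mono ?_
    rw [closure_ball z hr.ne']
    exact Metric.closedBall_subset_ball hrR
  have h1 := hd.circleAverage
  rw [Real.circleAverage] at h1
  have h2 : ∫ θ in (0 : ℝ)..2 * Real.pi, f (circleMap z r θ) =
      ∫ θ in (-Real.pi)..Real.pi, f (circleMap z r θ) := by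
    have := ((periodic_circleMap z r).comp f).intervalIntegral_add_eq 0 (-Real.pi)
    rw [zero_add, show -Real.pi + 2 * Real.pi = Real.pi by ring] at this
    exact this
  rw [h2, intervalIntegral.integral_of_le (by linarith), integral_Ioc_eq_integral_Ioo] at h1
  have h3 : ((2 * Real.pi : ℝ) : ℂ) * f z =
      ∫ θ in Set.Ioo (-Real.pi) Real.pi, f (circleMap z r θ) := by
    rw [← h1, Complex.real_smul, ← mul_assoc, ← Complex.ofReal_mul,
      mul_inv_cancel₀ (by positivity), Complex.ofReal_one, one_mul]
  calc ENNReal.ofReal (2 * Real.pi) * ‖f z‖ₑ = ‖((2 * Real.pi : ℝ) : ℂ) * f z‖ₑ := by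
        rw [enorm_mul]
        congr 1
        rw [← ofReal_norm, Complex.norm_real, Real.norm_of_nonneg (by positivity)]
    _ ≤ ∫⁻ θ in Set.Ioo (-Real.pi) Real.pi, ‖f (circleMap z r θ)‖ₑ := by
        rw [h3]; exact enorm_integral_le_lintegral_enorm _
    _ = _ := by
        congr 1; ext θ
        rw [Complex.polarCoord_symm_apply, circleMap, Complex.exp_mul_I]
        simp

lemma area_bound {f : ℂ → ℂ} {z : ℂ} {R : ℝ} (hR : 0 < R)
    (hf : DifferentiableOn ℂ f (Metric.ball z R)) :
    ENNReal.ofReal (Real.pi * R ^ 2) * ‖f z‖ₑ ≤ ∫⁻ ζ in Metric.ball z R, ‖f ζ‖ₑ := by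
  classical
  have hpi := Real.pi_pos
  let G : ℂ → ℝ≥0∞ := (Metric.ball z R).indicator (fun ζ => ‖f ζ‖ₑ)
  have hG : Measurable G := by
    have hc : ContinuousOn (fun ζ => ‖f ζ‖ₑ) (Metric.ball z R) := hf.continuousOn.enorm
    have := hc.measurable_piecewise (continuousOn_const (c := (0 : ℝ≥0∞))) 
      Metric.isOpen_ball.measurableSet
    simpa [G, Set.piecewise_eq_indicator] using! this
  rw [← lintegral_indicator Metric.isOpen_ball.measurableSet]
  change _ ≤ ∫⁻ ζ, G ζ
  rw [← lintegral_add_left_eq_self G z, ← Complex.lintegral_comp_polarCoord_symm,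
    polarCoord_target, Measure.volume_eq_prod, ← Measure.prod_restrict]
  have hm : Measurable fun p : ℝ × ℝ => 
      ENNReal.ofReal p.1 • G (z + Complex.polarCoord.symm p) := by
    have : Measurable fun p : ℝ × ℝ => Complex.polarCoord.symm p := by
      simp only [Complex.polarCoord_symm_apply]
      fun_prop
    simp only [smul_eq_mul]
    exact (measurable_fst.ennreal_ofReal).mul (hG.comp (this.const_add z))
  rw [lintegral_prod _ hm.aemeasurable]
  have hI : ENNReal.ofReal (R ^ 2 / 2) = ∫⁻ r in Set.Ioo 0 R, ENNReal.ofReal r := by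
    rw [← ofReal_integral_eq_lintegral_ofReal]
    · rw [← integral_Ioc_eq_integral_Ioo, ← intervalIntegral.integral_of_le hR.le, integral_id]
      simp
    · exact (continuous_id.integrableOn_Icc (a := 0) (b := R)).mono_set Set.Ioo_subset_Icc_self
    · filter_upwards [ae_restrict_mem measurableSet_Ioo] with r hr
      exact hr.1.le
  calc ENNReal.ofReal (Real.pi * R ^ 2) * ‖f z‖ₑ
      = ENNReal.ofReal (R ^ 2 / 2) * (ENNReal.ofReal (2 * Real.pi) * ‖f z‖ₑ) := by
        rw [← mul_assoc, ← ENNReal.ofReal_mul (by positivity)]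
        congr 2; ring
    _ = ∫⁻ r in Set.Ioo 0 R, ENNReal.ofReal r * (ENNReal.ofReal (2 * Real.pi) * ‖f z‖ₑ) := by
        rw [hI, lintegral_mul_const _ (by fun_prop)]
    _ ≤ ∫⁻ r in Set.Ioo 0 R, ∫⁻ θ in Set.Ioo (-Real.pi) Real.pi,
          ENNReal.ofReal r • G (z + Complex.polarCoord.symm (r, θ)) := by
        refine setLIntegral_mono' measurableSet_Ioo fun r hr => ?_
        simp only [smul_eq_mul]
        rw [lintegral_const_mul']
        · refine mul_le_mul_right ((circle_bound hr.1 hr.2 hf).trans (le_of_eq ?_)) _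
          congr 1; ext θ
          have : z + Complex.polarCoord.symm (r, θ) ∈ Metric.ball z R := by
            rw [Metric.mem_ball, dist_eq_norm, add_sub_cancel_left, Complex.norm_polarCoord_symm,
              abs_of_pos hr.1]
            exact hr.2
          simp only [G]
          rw [Set.indicator_of_mem this]
        · exact ENNReal.ofReal_ne_top
    _ ≤ _ := lintegral_mono_set (fun r hr => hr.1)

lemma area_bound_p {f : ℂ → ℂ} {z : ℂ} {R p : ℝ} (hR : 0 < R) (hp : 1 ≤ p)
    (hf : DifferentiableOn ℂ f (Metric.ball z R)) :
    ENNReal.ofReal (Real.pi * R ^ 2) * ‖f z‖ₑ ^ p ≤ ∫⁻ ζ in Metric.ball z R, ‖f ζ‖ₑ ^ p := by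
  have hpi := Real.pi_pos
  have hp0 : 0 < p := by linarith
  have h1 := area_bound hR hf
  set m := ENNReal.ofReal (Real.pi * R ^ 2) with hm
  have hm0 : m ≠ 0 := by rw [hm]; simp; positivity
  have hmt : m ≠ ⊤ := ENNReal.ofReal_ne_top
  have hms : (volume.restrict (Metric.ball z R)) Set.univ = m := by
    rw [Measure.restrict_apply_univ, Complex.volume_ball, hm, ENNReal.ofReal_mul hpi.le,
      ENNReal.ofReal_pow hR.le, mul_comm]
    congr 1
    rw [← NNReal.coe_real_pi, ENNReal.ofReal_coe_nnreal]
  have h2 := eLpNorm'_le_eLpNorm'_mul_rpow_measure_univ (μ := volume.restrict (Metric.ball z R))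
    (f := f) one_pos hp (hf.continuousOn.aestronglyMeasurable Metric.isOpen_ball.measurableSet)
  rw [hms] at h2
  simp only [eLpNorm', ENNReal.rpow_one, div_one] at h2
  have h3 := ENNReal.rpow_le_rpow (h1.trans h2) hp0.le
  rw [ENNReal.mul_rpow_of_nonneg _ _ hp0.le, ENNReal.mul_rpow_of_nonneg _ _ hp0.le,
    ← ENNReal.rpow_mul, ← ENNReal.rpow_mul, one_div_mul_cancel hp0.ne', ENNReal.rpow_one,
    sub_mul, one_div_mul_cancel hp0.ne', one_mul] at h3
  have h4 : m ^ p = m * m ^ (p - 1) := by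
    rw [ENNReal.rpow_sub _ _ hm0 hmt, ENNReal.rpow_one, ENNReal.mul_div_cancel hm0 hmt]
  have h5 : m ^ (p - 1) ≠ 0 := by simp [hm0, hmt]
  have h6 : m ^ (p - 1) ≠ ⊤ := by simp [hm0, hmt]
  rw [h4, mul_right_comm] at h3
  exact (ENNReal.mul_le_mul_iff_left h5 h6).1 h3

lemma strip_bound {f : ℂ → ℂ} {p a : ℝ} (hp : 1 ≤ p) {y₁ y₂ : ℝ} (h1 : 0 < y₁) 
    (S : Set ℂ) (hS : MeasurableSet S) (hSy : ∀ ζ ∈ S, ζ.im ∈ Set.Ioo y₁ y₂) :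
    ∫⁻ ζ in S, ‖f ζ‖ₑ ^ p * ENNReal.ofReal (|ζ.re| ^ a) ≤
      ENNReal.ofReal (y₂ - y₁) * hardyNorm p a f ^ p := by
  have hp0 : 0 < p := by linarith
  let G : ℂ → ℝ≥0∞ := fun ζ => (Set.Ioo y₁ y₂).indicator
    (fun _ => ‖f ζ‖ₑ ^ p * ENNReal.ofReal (|ζ.re| ^ a)) ζ.im
  rw [← lintegral_indicator hS]
  calc _ ≤ ∫⁻ ζ, G ζ := by
        refine lintegral_mono fun ζ => ?_
        by_cases h : ζ ∈ S
        · simp only [G]; rw [Set.indicator_of_mem h, Set.indicator_of_mem (hSy ζ h)]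
        · rw [Set.indicator_of_notMem h]; exact zero_le
    _ = ∫⁻ q : ℝ × ℝ, G ⟨q.1, q.2⟩ := by
        rw [← (Complex.volume_preserving_equiv_real_prod.symm).lintegral_comp_emb
          Complex.measurableEquivRealProd.symm.measurableEmbedding]
        rfl
    _ = ∫⁻ q : ℝ × ℝ, G ⟨q.2, q.1⟩ := by
        rw [Measure.volume_eq_prod, ← lintegral_prod_swap]; rfl
    _ ≤ ∫⁻ y, ∫⁻ x, G ⟨x, y⟩ := by
        rw [Measure.volume_eq_prod]; exact lintegral_prod_le _
    _ ≤ ∫⁻ y, (Set.Ioo y₁ y₂).indicator (fun _ => hardyNorm p a f ^ p) y := by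
        refine lintegral_mono fun y => ?_
        by_cases hy : y ∈ Set.Ioo y₁ y₂
        · simp only [G]
          simp only [Set.indicator_of_mem hy]
          have hy0 : y ∈ Set.Ioi (0 : ℝ) := h1.trans hy.1
          have := le_iSup₂ (f := fun (y : ℝ) (_ : y ∈ Set.Ioi (0 : ℝ)) =>
            (∫⁻ x : ℝ, (‖f ((x : ℂ) + (y : ℂ) * Complex.I)‖₊ : ℝ≥0∞) ^ p *
              ENNReal.ofReal (|x| ^ a)) ^ (1 / p)) y hy0
          have h3 := ENNReal.rpow_le_rpow this hp0.le
          rw [← ENNReal.rpow_mul, one_div_mul_cancel hp0.ne', ENNReal.rpow_one] at h3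
          refine le_trans (le_of_eq ?_) h3
          congr 1; ext x
          congr 3
          rw [← Complex.mk_eq_add_mul_I]
        · simp only [G]
          simp [Set.indicator_of_notMem hy]
    _ = _ := by
        rw [lintegral_indicator measurableSet_Ioo, setLIntegral_const, Real.volume_Ioo, mul_comm]

lemma rpow_lower {s a : ℝ} (h1 : 1 / 2 ≤ s) (h2 : s ≤ 2) : (2 : ℝ) ^ (-|a|) ≤ s ^ a := by
  have hs : 0 < s := by linarith
  rcases le_total 0 a with ha | ha
  · rw [abs_of_nonneg ha]
    calc (2 : ℝ) ^ (-a) = (1 / 2) ^ a := by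
          rw [one_div, Real.inv_rpow (by norm_num), Real.rpow_neg (by norm_num)]
      _ ≤ s ^ a := Real.rpow_le_rpow (by norm_num) h1 ha
  · rw [abs_of_nonpos ha, neg_neg]
    exact Real.rpow_le_rpow_of_nonpos hs h2 ha

lemma off_axis {f : ℂ → ℂ} {p a : ℝ} (hp : 1 ≤ p) (hf : DifferentiableOn ℂ f upperHalf)
    (hN : hardyNorm p a f < ⊤) :
    ∃ K : ℝ, 0 < K ∧ ∀ (z : ℂ) (R : ℝ), 0 < R → R ≤ |z.re| / 2 → R ≤ z.im / 2 →
      ‖f z‖ ^ p ≤ K * (|z.re| ^ (-a) * z.im / R ^ 2) := by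
  have hpi := Real.pi_pos
  have hp0 : 0 < p := by linarith
  let κ : ℝ := 2 ^ (-|a|)
  have hκ : 0 < κ := Real.rpow_pos_of_pos (by norm_num) _
  let M : ℝ := (hardyNorm p a f ^ p).toReal
  have hMt : hardyNorm p a f ^ p ≠ ⊤ := ENNReal.rpow_ne_top_of_nonneg hp0.le hN.ne
  have hM0 : 0 ≤ M := ENNReal.toReal_nonneg
  refine ⟨(M + 1) / (κ * Real.pi), by positivity, fun z R hR hRx hRy => ?_⟩
  have hx : 0 < |z.re| := by linarith
  have hy : 0 < z.im := by linarith
  have hball : ∀ ζ ∈ Metric.ball z R, |ζ.re - z.re| < R ∧ |ζ.im - z.im| < R := by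
    intro ζ hζ
    rw [Metric.mem_ball, dist_eq_norm] at hζ
    have h1 := Complex.abs_re_le_norm (ζ - z)
    have h2 := Complex.abs_im_le_norm (ζ - z)
    rw [Complex.sub_re] at h1
    rw [Complex.sub_im] at h2
    exact ⟨h1.trans_lt hζ, h2.trans_lt hζ⟩
  have him : ∀ ζ ∈ Metric.ball z R, ζ.im ∈ Set.Ioo (z.im / 2) (3 * z.im / 2) := by
    intro ζ hζ
    have := abs_lt.1 (hball ζ hζ).2
    exact ⟨by linarith, by linarith⟩
  have hsub : Metric.ball z R ⊆ upperHalf := by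
    intro ζ hζ
    have := (him ζ hζ).1
    change 0 < ζ.im
    linarith
  have hre : ∀ ζ ∈ Metric.ball z R, κ * |z.re| ^ a ≤ |ζ.re| ^ a := by
    intro ζ hζ
    have h1 := (hball ζ hζ).1
    have h2 := abs_sub_abs_le_abs_sub ζ.re z.re
    have h3 := abs_sub_abs_le_abs_sub z.re ζ.re
    rw [abs_sub_comm] at h3
    have h4 : |ζ.re| = (|ζ.re| / |z.re|) * |z.re| := by field_simp
    rw [h4, Real.mul_rpow (by positivity) hx.le]
    refine mul_le_mul_of_nonneg_right (rpow_lower ?_ ?_) (by positivity)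
    · rw [le_div_iff₀ hx]; linarith
    · rw [div_le_iff₀ hx]; linarith
  have b1 := area_bound_p hR hp (hf.mono hsub)
  have b2 := strip_bound (f := f) (a := a) hp (half_pos hy) (Metric.ball z R) 
    Metric.isOpen_ball.measurableSet him
  have b3 : (∫⁻ ζ in Metric.ball z R, ‖f ζ‖ₑ ^ p) * ENNReal.ofReal (κ * |z.re| ^ a) ≤
      ∫⁻ ζ in Metric.ball z R, ‖f ζ‖ₑ ^ p * ENNReal.ofReal (|ζ.re| ^ a) := by
    rw [← lintegral_mul_const' _ _ ENNReal.ofReal_ne_top]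
    refine setLIntegral_mono' Metric.isOpen_ball.measurableSet fun ζ hζ => ?_
    gcongr
    exact hre ζ hζ
  have b4 : ENNReal.ofReal (Real.pi * R ^ 2) * ‖f z‖ₑ ^ p * ENNReal.ofReal (κ * |z.re| ^ a) ≤
      ENNReal.ofReal (3 * z.im / 2 - z.im / 2) * hardyNorm p a f ^ p :=
    (mul_le_mul_left b1 _).trans (b3.trans b2)
  have b5 := ENNReal.toReal_mono (ENNReal.mul_ne_top ENNReal.ofReal_ne_top hMt) b4
  rw [ENNReal.toReal_mul, ENNReal.toReal_mul, ENNReal.toReal_mul, ← ENNReal.toReal_rpow,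
    ENNReal.toReal_ofReal (by positivity), ENNReal.toReal_ofReal (by positivity),
    ENNReal.toReal_ofReal (by linarith), toReal_enorm] at b5
  change _ ≤ _ * M at b5
  have hxa : 0 < |z.re| ^ a := Real.rpow_pos_of_pos hx _
  rw [Real.rpow_neg hx.le]
  have e : (M + 1) / (κ * Real.pi) * ((|z.re| ^ a)⁻¹ * z.im / R ^ 2) =
      (z.im * (M + 1)) / (Real.pi * R ^ 2 * (κ * |z.re| ^ a)) := by
    field_simp
  rw [e, le_div_iff₀ (by positivity)]
  have : (3 * z.im / 2 - z.im / 2) * M = z.im * M := by ring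
  nlinarith

lemma root_bound {A K r p s : ℝ} (hp : 1 ≤ p) (hA : 0 ≤ A) (hK : 0 ≤ K) (hr : 0 < r)
    (h : A ^ p ≤ K * r ^ s) : A ≤ K ^ (1 / p) * r ^ (s / p) := by
  have hp0 : 0 < p := by linarith
  have h1 : (A ^ p) ^ (1 / p) ≤ (K * r ^ s) ^ (1 / p) :=
    Real.rpow_le_rpow (Real.rpow_nonneg hA _) h (by positivity)
  rw [← Real.rpow_mul hA, Real.mul_rpow hK (Real.rpow_nonneg hr.le _), ← Real.rpow_mul hr.le,
    mul_one_div_cancel hp0.ne', Real.rpow_one, mul_one_div] at h1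
  exact h1

lemma growth_off {f : ℂ → ℂ} {p a : ℝ} (hp : 1 ≤ p)
    (hf : DifferentiableOn ℂ f upperHalf) (hN : hardyNorm p a f < ⊤) {z : ℂ}
    (hz : z ∈ upperHalf) (hx : z.re ≠ 0) :
    ∃ C : ℝ, ∀ r : ℝ, 0 < r → ‖f (r * z)‖ ≤ C * r ^ (-((a + 1) / p)) := by
  obtain ⟨K, hK, h⟩ := off_axis hp hf hN
  have hy : 0 < z.im := hz
  have hx' : 0 < |z.re| := abs_pos.mpr hx
  set m := min |z.re| z.im / 2 with hm
  have hm0 : 0 < m := by have := lt_min hx' hy; positivity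
  refine ⟨(K * (|z.re| ^ (-a) * z.im / m ^ 2)) ^ (1 / p), fun r hr => ?_⟩
  have h1 := h (r * z) (r * m) (by positivity)
    (by
      have : min |z.re| z.im ≤ |z.re| := min_le_left _ _
      simp only [Complex.re_ofReal_mul, abs_mul, abs_of_pos hr]
      rw [mul_div_assoc]
      gcongr
      linarith)
    (by
      have : min |z.re| z.im ≤ z.im := min_le_right _ _
      simp only [Complex.im_ofReal_mul]
      rw [mul_div_assoc]
      gcongr
      linarith)
  have h2 := root_bound (K := K * (|z.re| ^ (-a) * z.im / m ^ 2)) (r := r) (s := -(a + 1)) hp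
    (norm_nonneg (f (r * z))) (by positivity) hr (h1.trans_eq (by
      simp only [Complex.re_ofReal_mul, Complex.im_ofReal_mul, abs_mul, abs_of_pos hr]
      rw [Real.mul_rpow hr.le hx'.le]
      have : r ^ (-(a + 1)) = r ^ (-a) * r⁻¹ := by
        rw [← Real.rpow_neg_one, ← Real.rpow_add hr]; ring_nf
      rw [this]
      field_simp))
  rwa [neg_div] at h2

lemma sphere_id {y : ℝ} (_hy : 0 < y) {w : ℂ} (hw : ‖w‖ = y / 2) :
    ‖w ^ 2 + ((y ^ 2 / 4 : ℝ) : ℂ)‖ = y * |w.re| := by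
  have h0 : w.re ^ 2 + w.im ^ 2 = (y / 2) ^ 2 := by
    rw [← hw, ← Complex.normSq_eq_norm_sq, Complex.normSq_apply]; ring
  have h1 : w ^ 2 + ((y ^ 2 / 4 : ℝ) : ℂ) = w * ((2 * w.re : ℝ) : ℂ) := by
    apply Complex.ext
    · simp [pow_two]; nlinarith
    · simp [pow_two]; ring
  rw [h1, norm_mul, hw, Complex.norm_real, Real.norm_eq_abs, abs_mul]
  norm_num; ring

lemma growth_on {f : ℂ → ℂ} {p a : ℝ} (hp : 1 ≤ p)
    (hf : DifferentiableOn ℂ f upperHalf) (hN : hardyNorm p a f < ⊤) :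
    ∃ C : ℝ, ∀ y : ℝ, 0 < y → ‖f (y * Complex.I)‖ ≤ C * y ^ (-((a + 1) / p)) := by
  obtain ⟨K, hK, h⟩ := off_axis hp hf hN
  have hp0 : 0 < p := by linarith
  obtain ⟨N, hN'⟩ := exists_nat_ge (max 1 ((a + 2) / p))
  have hN1 : (1 : ℝ) ≤ N := (le_max_left _ _).trans hN'
  have hN2 : (a + 2) / p ≤ N := (le_max_right _ _).trans hN'
  have hN0 : N ≠ 0 := by rintro rfl; norm_num at hN1
  refine ⟨4 ^ N * (6 * K) ^ (1 / p), fun y hy => ?_⟩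
  set c := (a + 1) / p with hc
  set g : ℂ → ℂ := fun ζ => f ζ * ((ζ - y * Complex.I) ^ 2 + ((y ^ 2 / 4 : ℝ) : ℂ)) ^ N with hg
  have hsub : Metric.closedBall (y * Complex.I : ℂ) (y / 2) ⊆ upperHalf := by
    intro ζ hζ
    rw [mem_closedBall_iff_norm] at hζ
    have h1 := (Complex.abs_im_le_norm (ζ - y * Complex.I)).trans hζ
    have h2 : (ζ - y * Complex.I).im = ζ.im - y := by simp
    rw [h2, abs_le] at h1
    show 0 < ζ.im
    linarith [h1.1]
  have hgd : DiffContOnCl ℂ g (Metric.ball (y * Complex.I : ℂ) (y / 2)) := by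
    apply DifferentiableOn.diffContOnCl
    rw [closure_ball _ (by positivity)]
    refine (hf.mono hsub).mul ?_
    apply Differentiable.differentiableOn
    fun_prop
  have key : ∀ ζ ∈ frontier (Metric.ball (y * Complex.I : ℂ) (y / 2)),
      ‖g ζ‖ ≤ (6 * K) ^ (1 / p) * y ^ (-c) * (y ^ 2) ^ N := by
    intro ζ hζ
    rw [frontier_ball _ (by positivity), mem_sphere_iff_norm] at hζ
    have hid := sphere_id hy hζ
    have hre : (ζ - y * Complex.I).re = ζ.re := by simp
    rw [hre] at hid
    simp only [hg]
    rw [norm_mul, norm_pow, hid]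
    by_cases hx : ζ.re = 0
    · rw [hx, abs_zero, mul_zero, zero_pow hN0, mul_zero]
      positivity
    have hx' : 0 < |ζ.re| := abs_pos.mpr hx
    have h1 := (Complex.abs_im_le_norm (ζ - y * Complex.I)).trans_eq hζ
    have h2 : (ζ - y * Complex.I).im = ζ.im - y := by simp
    rw [h2, abs_le] at h1
    have h3 := (Complex.abs_re_le_norm (ζ - y * Complex.I)).trans_eq hζ
    rw [hre] at h3
    have h4 := h ζ (|ζ.re| / 2) (by positivity) le_rfl (by linarith [h1.1])
    have h5 : ‖f ζ‖ ^ p ≤ (6 * K * y) * |ζ.re| ^ (-(a + 2)) := by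
      refine h4.trans ?_
      have e : |ζ.re| ^ (-(a + 2)) = |ζ.re| ^ (-a) / |ζ.re| ^ 2 := by
        rw [← Real.rpow_natCast, ← Real.rpow_sub hx']; congr 1; push_cast; ring
      rw [e]
      calc K * (|ζ.re| ^ (-a) * ζ.im / (|ζ.re| / 2) ^ 2)
          = K * (|ζ.re| ^ (-a) * (4 * ζ.im) / |ζ.re| ^ 2) := by field_simp; ring
        _ ≤ K * (|ζ.re| ^ (-a) * (6 * y) / |ζ.re| ^ 2) := by
            gcongr ?_ * (?_ * ?_ / ?_); linarith [h1.2]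
        _ = _ := by ring
    have h6 := root_bound hp (norm_nonneg _) (by positivity) hx' h5
    have e7 : |ζ.re| ^ (-(a + 2) / p) * |ζ.re| ^ N ≤ y ^ ((N : ℝ) - (a + 2) / p) := by
      rw [← Real.rpow_natCast, ← Real.rpow_add hx']
      have : -(a + 2) / p + N = (N : ℝ) - (a + 2) / p := by ring
      rw [this]
      exact Real.rpow_le_rpow hx'.le (by linarith) (by linarith)
    calc ‖f ζ‖ * (y * |ζ.re|) ^ N
        ≤ ((6 * K * y) ^ (1 / p) * |ζ.re| ^ (-(a + 2) / p)) * (y * |ζ.re|) ^ N := by gcongr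
      _ = (6 * K * y) ^ (1 / p) * y ^ N * (|ζ.re| ^ (-(a + 2) / p) * |ζ.re| ^ N) := by
          rw [mul_pow]; ring
      _ ≤ (6 * K * y) ^ (1 / p) * y ^ N * y ^ ((N : ℝ) - (a + 2) / p) := by gcongr
      _ = (6 * K) ^ (1 / p) * (y ^ (1 / p) * y ^ ((N : ℝ) - (a + 2) / p) * y ^ N) := by
          rw [Real.mul_rpow (by positivity) hy.le]; ring
      _ = (6 * K) ^ (1 / p) * (y ^ (-c) * (y ^ 2) ^ N) := by
          congr 1
          rw [← pow_mul, ← Real.rpow_natCast y N, ← Real.rpow_natCast y (2 * N),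
            ← Real.rpow_add hy, ← Real.rpow_add hy, ← Real.rpow_add hy]
          congr 1
          push_cast
          rw [hc]; field_simp; ring
      _ = _ := by ring
  have hmax := Complex.norm_le_of_forall_mem_frontier_norm_le Metric.isBounded_ball hgd key
    (subset_closure (Metric.mem_ball_self (by positivity : (0 : ℝ) < y / 2)))
  have e8 : ‖g (y * Complex.I)‖ = ‖f (y * Complex.I)‖ * (y ^ 2 / 4) ^ N := by
    simp only [hg]
    rw [sub_self, norm_mul, norm_pow, zero_pow two_ne_zero, zero_add, Complex.norm_real,
      Real.norm_of_nonneg (by positivity)]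
  rw [e8, div_pow] at hmax
  have hpos : 0 < (y ^ 2) ^ N := by positivity
  have h4 : (0 : ℝ) < 4 ^ N := by positivity
  rw [← mul_le_mul_iff_left₀ (show 0 < (y ^ 2) ^ N / 4 ^ N by positivity)]
  refine hmax.trans_eq ?_
  field_simp

lemma growth {f : ℂ → ℂ} {p a : ℝ} (hp : 1 ≤ p)
    (hf : DifferentiableOn ℂ f upperHalf) (hN : hardyNorm p a f < ⊤) {z : ℂ}
    (hz : z ∈ upperHalf) :
    ∃ C : ℝ, ∀ r : ℝ, 0 < r → ‖f (r * z)‖ ≤ C * r ^ (-((a + 1) / p)) := by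
  by_cases hx : z.re = 0
  · obtain ⟨C, hC⟩ := growth_on hp hf hN
    have hy : 0 < z.im := hz
    refine ⟨C * z.im ^ (-((a + 1) / p)), fun r hr => ?_⟩
    have h1 := hC (r * z.im) (by positivity)
    have e : (r * z : ℂ) = ((r * z.im : ℝ) : ℂ) * Complex.I := by
      apply Complex.ext <;> simp [hx]
    rw [e]
    refine h1.trans_eq ?_
    rw [Real.mul_rpow hr.le hy.le]; ring
  · exact growth_off hp hf hN hz hx

/-- The profile along a ray. -/
noncomputable def rayf (z : ℂ) (c : ℝ) (F : ℂ → ℂ) (x : ℝ) : ℂ :=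
  F (z * (Real.exp x : ℂ)) * (Real.exp (c * x) : ℂ)

/-- The kernel in exponential coordinates. -/
noncomputable def expk (φ : ℝ → ℂ) (c : ℝ) (s : ℝ) : ℂ :=
  φ (Real.exp s) * (Real.exp (c * s) : ℂ)

lemma exp_image : Real.exp '' Set.univ = Set.Ioi 0 := by
  rw [Set.image_univ, Real.range_exp]

lemma integral_exp_change {E : Type*} [NormedAddCommGroup E] [NormedSpace ℝ E] (g : ℝ → E) :
    ∫ t in Set.Ioi (0 : ℝ), g t = ∫ s, Real.exp s • g (Real.exp s) := by
  rw [← exp_image, integral_image_eq_integral_abs_deriv_smul MeasurableSet.univ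
    (fun x _ => (Real.hasDerivAt_exp x).hasDerivWithinAt) Real.exp_injective.injOn]
  simp [abs_of_pos (Real.exp_pos _)]

lemma integrable_exp_change {E : Type*} [NormedAddCommGroup E] [NormedSpace ℝ E] (g : ℝ → E) :
    IntegrableOn g (Set.Ioi (0 : ℝ)) ↔ Integrable (fun s => Real.exp s • g (Real.exp s)) := by
  rw [← exp_image, integrableOn_image_iff_integrableOn_abs_deriv_smul MeasurableSet.univ
    (fun x _ => (Real.hasDerivAt_exp x).hasDerivWithinAt) Real.exp_injective.injOn]
  simp [abs_of_pos (Real.exp_pos _)]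

lemma exp_weight (c s : ℝ) : Real.exp s * Real.exp s ^ (c - 1) = Real.exp (c * s) := by
  rw [← Real.exp_mul, ← Real.exp_add]; congr 1; ring

lemma weight_iff (φ : ℝ → ℂ) (c : ℝ) (hφ : Measurable φ) :
    IntegrableOn (fun t => ‖φ t‖ * t ^ (c - 1)) (Set.Ioi (0 : ℝ)) ↔ Integrable (expk φ c) := by
  have hm : Measurable (expk φ c) := by
    unfold expk
    exact (hφ.comp Real.measurable_exp).mul (by fun_prop)
  rw [integrable_exp_change, ← integrable_norm_iff hm.aestronglyMeasurable]
  apply Iff.of_eq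
  congr 1
  ext s
  rw [expk, norm_mul, Complex.norm_real, Real.norm_of_nonneg (Real.exp_pos _).le, ← exp_weight,
    smul_eq_mul]
  ring

lemma fourier_expk (φ : ℝ → ℂ) (c ξ : ℝ) :
    𝓕 (expk φ c) ξ = khat φ c (2 * Real.pi * ξ) := by
  rw [khat, integral_exp_change, Real.fourier_real_eq_integral_exp_smul]
  congr 1
  ext s
  have h : ((Real.exp s : ℝ) : ℂ) ≠ 0 := by exact_mod_cast (Real.exp_pos s).ne'
  rw [Complex.cpow_def_of_ne_zero h, ← Complex.ofReal_log (Real.exp_pos s).le, Real.log_exp,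
    expk, smul_eq_mul, Complex.real_smul, Complex.ofReal_exp, Complex.ofReal_exp]
  rw [mul_left_comm, mul_left_comm (Complex.exp s), ← Complex.exp_add, ← Complex.exp_add]
  congr 2
  push_cast
  ring

lemma ray_H (φ : ℝ → ℂ) (c : ℝ) (F : ℂ → ℂ) (z : ℂ) :
    rayf z c (HphiHol φ F) = expk φ c ⋆[ContinuousLinearMap.mul ℂ ℂ] rayf z c F := by
  ext x
  rw [convolution_mul, rayf, HphiHol, integral_exp_change, ← integral_mul_const]
  congr 1
  ext s
  have h : ((Real.exp s : ℝ) : ℂ) ≠ 0 := by exact_mod_cast (Real.exp_pos s).ne'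
  have e : z * (Real.exp x : ℂ) / (Real.exp s : ℂ) = z * (Real.exp (x - s) : ℂ) := by
    rw [Real.exp_sub]; push_cast; ring
  have e2 : (Real.exp (c * x) : ℂ) = (Real.exp (c * s) : ℂ) * (Real.exp (c * (x - s)) : ℂ) := by
    rw [← Complex.ofReal_mul, ← Real.exp_add]; congr 2; ring
  rw [e, e2, Complex.real_smul, expk, rayf]
  field_simp

lemma convEx {k G : ℝ → ℂ} (hk : Integrable k) (hG : Continuous G) {B : ℝ}
    (hB : ∀ x, ‖G x‖ ≤ B) : ConvolutionExists k G (ContinuousLinearMap.mul ℂ ℂ) := by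
  intro x
  exact hk.mul_bdd (c := B) (by fun_prop) (Filter.Eventually.of_forall fun t => hB _)

lemma conv_cont {k G : ℝ → ℂ} (hk : Integrable k) (hG : Continuous G) {B : ℝ}
    (hB : ∀ x, ‖G x‖ ≤ B) : Continuous (k ⋆[ContinuousLinearMap.mul ℂ ℂ] G) := by
  refine BddAbove.continuous_convolution_right_of_integrable _ ?_ hk hG
  exact ⟨B, by rintro _ ⟨x, rfl⟩; exact hB x⟩

lemma conv_bdd {k G : ℝ → ℂ} (hk : Integrable k) {B : ℝ}
    (hB : ∀ x, ‖G x‖ ≤ B) (x : ℝ) :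
    ‖(k ⋆[ContinuousLinearMap.mul ℂ ℂ] G) x‖ ≤ (∫ t, ‖k t‖) * B := by
  rw [convolution_mul, ← integral_mul_const]
  refine norm_integral_le_of_norm_le (hk.norm.mul_const B) (Filter.Eventually.of_forall fun t => ?_)
  rw [norm_mul]
  exact mul_le_mul_of_nonneg_left (hB _) (norm_nonneg _)

lemma conv_assoc_bdd {q k G : ℝ → ℂ} (hq : Integrable q) (hk : Integrable k) (hG : Continuous G)
    {B : ℝ} (hB : ∀ x, ‖G x‖ ≤ B) (x : ℝ) :
    ((q ⋆[ContinuousLinearMap.mul ℂ ℂ] k) ⋆[ContinuousLinearMap.mul ℂ ℂ] G) x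
      = (q ⋆[ContinuousLinearMap.mul ℂ ℂ] (k ⋆[ContinuousLinearMap.mul ℂ ℂ] G)) x := by
  have hB' : ∀ x, ‖(fun x => ‖G x‖) x‖ ≤ B := fun x => by simpa using hB x
  refine convolution_assoc _ _ _ _ (fun x y z => ?_) hq.aestronglyMeasurable
    hk.aestronglyMeasurable hG.aestronglyMeasurable (hq.ae_convolution_exists _ hk)
    (Filter.Eventually.of_forall fun y => ?_) ?_
  · simp [mul_assoc]
  · exact hk.norm.mul_bdd (c := B) (by fun_prop) (Filter.Eventually.of_forall fun t => hB' _)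
  · have hc : Continuous ((fun x => ‖k x‖) ⋆[ContinuousLinearMap.mul ℝ ℝ] fun x => ‖G x‖) :=
      BddAbove.continuous_convolution_right_of_integrable _
        ⟨B, by rintro _ ⟨x, rfl⟩; exact hB' x⟩ hk.norm (by fun_prop)
    refine hq.norm.mul_bdd (c := (∫ t, ‖k t‖) * B) ?_ (Filter.Eventually.of_forall fun t => ?_)
    · exact (hc.comp (by fun_prop : Continuous fun t => x - t)).aestronglyMeasurable
    · rw [convolution_mul, ← integral_mul_const]
      refine norm_integral_le_of_norm_le (hk.norm.mul_const B)
        (Filter.Eventually.of_forall fun t => ?_)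
      rw [norm_mul, norm_norm]
      exact mul_le_mul_of_nonneg_left (hB' _) (norm_nonneg _)

lemma conv_comm (q k : ℝ → ℂ) :
    q ⋆[ContinuousLinearMap.mul ℂ ℂ] k = k ⋆[ContinuousLinearMap.mul ℂ ℂ] q := by
  ext x
  rw [convolution_mul_swap, convolution_mul]
  congr 1
  ext t
  ring

lemma resolvent_conv {q k G : ℝ → ℂ} {l : ℂ} (hq : Integrable q) (hk : Integrable k)
    (hqk : ∀ᵐ x, l * q x = k x + (q ⋆[ContinuousLinearMap.mul ℂ ℂ] k) x)
    (hG : Continuous G) {B : ℝ} (hB : ∀ x, ‖G x‖ ≤ B) (x : ℝ) :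
    l * (q ⋆[ContinuousLinearMap.mul ℂ ℂ] G) x = (k ⋆[ContinuousLinearMap.mul ℂ ℂ] G) x
      + (q ⋆[ContinuousLinearMap.mul ℂ ℂ] (k ⋆[ContinuousLinearMap.mul ℂ ℂ] G)) x := by
  rw [← conv_assoc_bdd hq hk hG hB, ← (convEx hk hG hB x).add_distrib
    (convEx (hq.integrable_convolution _ hk) hG hB x), convolution_mul, convolution_mul,
    ← integral_const_mul]
  refine integral_congr_ae ?_
  filter_upwards [hqk] with t ht
  rw [Pi.add_apply, ← ht, mul_assoc]

theorem stmt9 (p a : ℝ) (hp : 1 ≤ p) (ha : -1 < a) (φ : ℝ → ℂ) (hφm : Measurable φ)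
    (hφ : IntegrableOn (fun t => ‖φ t‖ * t ^ ((a + 1) / p - 1)) (Set.Ioi (0 : ℝ)))
    (l : ℂ) (hl : l ∉ closure (Set.range (khat φ ((a + 1) / p)))) :
    ∃ ψ : ℝ → ℂ, Measurable ψ ∧
      IntegrableOn (fun t => ‖ψ t‖ * t ^ ((a + 1) / p - 1)) (Set.Ioi (0 : ℝ)) ∧
      ∀ f : ℂ → ℂ, DifferentiableOn ℂ f upperHalf → hardyNorm p a f < ⊤ →
        (∀ z ∈ upperHalf,
          (1 / l) * ((fun w => l * f w - HphiHol φ f w) z +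
            HphiHol ψ (fun w => l * f w - HphiHol φ f w) z) = f z) ∧
        (∀ z ∈ upperHalf,
          l * ((fun w => (1 / l) * (f w + HphiHol ψ f w)) z) -
            HphiHol φ (fun w => (1 / l) * (f w + HphiHol ψ f w)) z = f z) := by
  set c := (a + 1) / p with hc
  have hk : Integrable (expk φ c) := (weight_iff φ c hφm).mp hφ
  obtain ⟨δ, hδ, hδl⟩ : ∃ δ > 0, ∀ ξ, δ ≤ ‖l - 𝓕 (expk φ c) ξ‖ := by
    rw [Metric.mem_closure_iff] at hl
    push Not at hl
    obtain ⟨δ, hδ, h⟩ := hl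
    refine ⟨δ, hδ, fun ξ => ?_⟩
    rw [fourier_expk, ← dist_eq_norm]
    exact h _ ⟨_, rfl⟩
  obtain ⟨hl0, q₀, hq₀, hqk₀⟩ := wiener hk l δ hδ hδl
  set q := hq₀.aestronglyMeasurable.mk q₀ with hqdef
  have hae : q₀ =ᵐ[volume] q := hq₀.aestronglyMeasurable.ae_eq_mk
  have hqm : Measurable q := hq₀.aestronglyMeasurable.stronglyMeasurable_mk.measurable
  have hq : Integrable q := hq₀.congr hae
  have hqk : ∀ᵐ x, l * q x = expk φ c x + (q ⋆[ContinuousLinearMap.mul ℂ ℂ] expk φ c) x := by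
    have e : q ⋆[ContinuousLinearMap.mul ℂ ℂ] expk φ c
        = q₀ ⋆[ContinuousLinearMap.mul ℂ ℂ] expk φ c := by
      ext x
      rw [convolution_mul, convolution_mul]
      refine integral_congr_ae ?_
      filter_upwards [hae] with t ht
      rw [ht]
    rw [e]
    filter_upwards [hqk₀, hae] with x h1 h2
    rw [← h2, h1]
  set ψ : ℝ → ℂ := fun t => q (Real.log t) * (Real.exp (-(c * Real.log t)) : ℂ) with hψ
  have hψm : Measurable ψ := (hqm.comp Real.measurable_log).mul (by fun_prop)
  have hψq : expk ψ c = q := by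
    ext s
    simp only [expk, hψ]
    rw [Real.log_exp, mul_assoc, ← Complex.ofReal_mul, ← Real.exp_add]
    simp
  refine ⟨ψ, hψm, (weight_iff ψ c hψm).mpr (hψq ▸ hq), fun f hf hN => ?_⟩
  have main : ∀ z ∈ upperHalf, Continuous (rayf z c f) ∧ ∃ B, ∀ x, ‖rayf z c f x‖ ≤ B := by
    intro z hz
    constructor
    · refine Continuous.mul ?_ (by fun_prop)
      refine hf.continuousOn.comp_continuous (by fun_prop) fun x => ?_
      show 0 < (z * (Real.exp x : ℂ)).im
      rw [Complex.im_mul_ofReal]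
      exact mul_pos hz (Real.exp_pos x)
    · obtain ⟨C, hC⟩ := growth hp hf hN hz
      refine ⟨C, fun x => ?_⟩
      have h1 := hC (Real.exp x) (Real.exp_pos x)
      rw [rayf, norm_mul, Complex.norm_real, Real.norm_of_nonneg (Real.exp_pos _).le, mul_comm z]
      calc _ ≤ C * Real.exp x ^ (-c) * Real.exp (c * x) := by gcongr
        _ = C := by
          rw [← Real.exp_mul, mul_assoc, ← Real.exp_add]
          ring_nf
          simp
  have ray0 : ∀ (z : ℂ) (F : ℂ → ℂ), rayf z c F 0 = F z := by
    intro z F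
    simp [rayf]
  constructor
  · intro z hz
    obtain ⟨hG, B, hB⟩ := main z hz
    set G := rayf z c f with hGdef
    have hK := conv_cont hk hG hB
    have hKb := conv_bdd hk hB
    have e1 : rayf z c (fun w => l * f w - HphiHol φ f w)
        = l • G + (-1 : ℂ) • (expk φ c ⋆[ContinuousLinearMap.mul ℂ ℂ] G) := by
      rw [hGdef, ← ray_H]
      ext x
      simp only [rayf, Pi.add_apply, Pi.smul_apply, smul_eq_mul]
      ring
    have hlG : ConvolutionExists q (l • G) (ContinuousLinearMap.mul ℂ ℂ) :=
      convEx (B := ‖l‖ * B) hq (hG.const_smul l) fun x => by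
        rw [Pi.smul_apply, norm_smul]; gcongr; exact hB x
    have hmK : ConvolutionExists q ((-1 : ℂ) • (expk φ c ⋆[ContinuousLinearMap.mul ℂ ℂ] G))
        (ContinuousLinearMap.mul ℂ ℂ) :=
      convEx (B := (∫ t, ‖expk φ c t‖) * B) hq (hK.const_smul _) fun x => by
        rw [Pi.smul_apply, norm_smul, norm_neg, norm_one, one_mul]; exact hKb x
    have e2 : HphiHol ψ (fun w => l * f w - HphiHol φ f w) z
        = l * (q ⋆[ContinuousLinearMap.mul ℂ ℂ] G) 0 - (q ⋆[ContinuousLinearMap.mul ℂ ℂ]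
          (expk φ c ⋆[ContinuousLinearMap.mul ℂ ℂ] G)) 0 := by
      rw [← ray0 z (HphiHol ψ _), ray_H, hψq, e1, hlG.distrib_add hmK, convolution_smul,
        convolution_smul]
      simp only [Pi.add_apply, Pi.smul_apply, smul_eq_mul]
      ring
    have e3 : HphiHol φ f z = (expk φ c ⋆[ContinuousLinearMap.mul ℂ ℂ] G) 0 := by
      rw [← ray0 z (HphiHol φ _), ray_H]
    rw [e2, resolvent_conv hq hk hqk hG hB]
    simp only [e3]
    field_simp
    ring
  · intro z hz
    obtain ⟨hG, B, hB⟩ := main z hz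
    set G := rayf z c f with hGdef
    have hK := conv_cont hq hG hB
    have hKb := conv_bdd hq hB
    have e1 : rayf z c (fun w => (1 / l) * (f w + HphiHol ψ f w))
        = (1 / l) • (G + (q ⋆[ContinuousLinearMap.mul ℂ ℂ] G)) := by
      rw [hGdef, ← hψq, ← ray_H]
      ext x
      simp only [rayf, Pi.add_apply, Pi.smul_apply, smul_eq_mul]
      ring
    have e2 : HphiHol φ (fun w => (1 / l) * (f w + HphiHol ψ f w)) z
        = (1 / l) * ((expk φ c ⋆[ContinuousLinearMap.mul ℂ ℂ] G) 0
          + (q ⋆[ContinuousLinearMap.mul ℂ ℂ]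
          (expk φ c ⋆[ContinuousLinearMap.mul ℂ ℂ] G)) 0) := by
      rw [← ray0 z (HphiHol φ _), ray_H, e1, convolution_smul,
        (convEx hk hG hB).distrib_add (convEx hk hK hKb), ← conv_assoc_bdd hq hk hG hB,
        conv_comm q (expk φ c), conv_assoc_bdd hk hq hG hB]
      simp only [Pi.add_apply, Pi.smul_apply, smul_eq_mul]
    have e3 : HphiHol ψ f z = (q ⋆[ContinuousLinearMap.mul ℂ ℂ] G) 0 := by
      rw [← ray0 z (HphiHol ψ _), ray_H, hψq]
    rw [e2, ← resolvent_conv hq hk hqk hG hB]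
    simp only [e3]
    field_simp
    ring
end

section
/- Let 1 ≤ p < ∞, a > −1, and let φ : (0,∞) → ℂ be measurable with ∫₀^∞ |φ(t)| t^{(a+1)/p − 1} dt < ∞. For ξ ∈ ℝ and ε ∈ (0,1), let f_{ε,ξ}(z) = (z+i)^{−(a+1)/p − ε + iξ} (principal branch) for z ∈ 𝕌. Then ‖f_{ε,ξ}‖_{H^p_{|·|^a}} < ∞ and, for each fixed ξ ∈ ℝ, lim_{ε→0⁺} ‖ℋ_φ f_{ε,ξ} − k̂_{a,p}(ξ)·f_{ε,ξ}‖_{H^p_{|·|^a}} / ‖f_{ε,ξ}‖_{H^p_{|·|^a}} = 0. -/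
open MeasureTheory Filter
open scoped ENNReal NNReal Topology

/-- The test function `f_{ε,ξ}(z) = (z+i)^{−c − ε + iξ}` (principal branch), `c = (a+1)/p`. -/
noncomputable def testFun (c ε ξ : ℝ) (z : ℂ) : ℂ :=
  (z + Complex.I) ^ (((-c - ε : ℝ) : ℂ) + Complex.I * (ξ : ℂ))

lemma aux_norm_le {w : ℂ} (hw : 0 < w.im) (r ξ : ℝ) :
    ‖w ^ ((r : ℂ) + Complex.I * (ξ : ℂ))‖ ≤ ‖w‖ ^ r * Real.exp (Real.pi * |ξ|) := by
  have hw0 : w ≠ 0 := by rintro rfl; simp at hw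
  rw [Complex.norm_cpow_of_ne_zero hw0, div_eq_mul_inv, ← Real.exp_neg]
  simp only [Complex.add_re, Complex.ofReal_re, Complex.mul_re, Complex.I_re, Complex.I_im,
    Complex.ofReal_im, Complex.add_im, Complex.mul_im, zero_mul, one_mul, mul_zero, sub_zero,
    add_zero, zero_add]
  gcongr
  have h1 := Complex.abs_arg_le_pi w
  calc -(w.arg * ξ) ≤ |w.arg * ξ| := neg_le_abs _
    _ = |w.arg| * |ξ| := abs_mul _ _
    _ ≤ _ := by gcongr

lemma aux_norm_ge {w : ℂ} (hw : 0 < w.im) (r ξ : ℝ) :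
    ‖w‖ ^ r * Real.exp (-(Real.pi * |ξ|)) ≤ ‖w ^ ((r : ℂ) + Complex.I * (ξ : ℂ))‖ := by
  have hw0 : w ≠ 0 := by rintro rfl; simp at hw
  rw [Complex.norm_cpow_of_ne_zero hw0, div_eq_mul_inv, ← Real.exp_neg]
  simp only [Complex.add_re, Complex.ofReal_re, Complex.mul_re, Complex.I_re, Complex.I_im,
    Complex.ofReal_im, Complex.add_im, Complex.mul_im, zero_mul, one_mul, mul_zero, sub_zero,
    add_zero, zero_add]
  refine mul_le_mul_of_nonneg_left (Real.exp_le_exp.2 (neg_le_neg ?_)) (by positivity)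
  have h1 := Complex.abs_arg_le_pi w
  calc (w.arg * ξ) ≤ |w.arg * ξ| := le_abs_self _
    _ = |w.arg| * |ξ| := abs_mul _ _
    _ ≤ _ := by gcongr

lemma aux_scale {t : ℝ} (ht : 0 < t) {z : ℂ} (hz : 0 < z.im) (c ε ξ : ℝ) :
    testFun c ε ξ (z / (t : ℂ)) = (t : ℂ) ^ ((c : ℂ) - Complex.I * ξ) *
      ((t : ℂ) ^ (ε : ℂ) * (z + t * Complex.I) ^ (((-c - ε : ℝ) : ℂ) + Complex.I * (ξ : ℂ))) := by
  have ht0 : (t : ℂ) ≠ 0 := by exact_mod_cast ht.ne'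
  have hw : (z + t * Complex.I) ≠ 0 := by
    intro h
    have := congrArg Complex.im h
    simp at this
    linarith
  have h1 : z / (t : ℂ) + Complex.I = ((t⁻¹ : ℝ) : ℂ) * (z + t * Complex.I) := by
    push_cast; field_simp
  have hti : ((t⁻¹ : ℝ) : ℂ) ≠ 0 := by exact_mod_cast (inv_pos.2 ht).ne'
  unfold testFun
  rw [h1, Complex.cpow_def_of_ne_zero (mul_ne_zero hti hw), Complex.cpow_def_of_ne_zero ht0,
    Complex.cpow_def_of_ne_zero ht0, Complex.cpow_def_of_ne_zero hw,
    Complex.log_ofReal_mul (inv_pos.2 ht) hw, ← Complex.exp_add, ← Complex.exp_add,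
    Real.log_inv, ← Complex.ofReal_log ht.le]
  congr 1
  push_cast
  ring

lemma aux_norm_mono {x u v : ℝ} (hu : 0 ≤ u) (huv : u ≤ v) :
    ‖(x : ℂ) + u * Complex.I‖ ≤ ‖(x : ℂ) + v * Complex.I‖ := by
  rw [Complex.norm_add_mul_I, Complex.norm_add_mul_I]
  gcongr

lemma aux_norm_pos (x : ℝ) {u : ℝ} (hu : 0 < u) : 0 < ‖(x : ℂ) + u * Complex.I‖ := by
  rw [Complex.norm_add_mul_I]
  positivity

lemma aux_norm_min {x m : ℝ} (hm : 0 < m) (hm1 : m ≤ 1) :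
    m * ‖(x : ℂ) + (1 : ℝ) * Complex.I‖ ≤ ‖(x : ℂ) + m * Complex.I‖ := by
  rw [Complex.norm_add_mul_I, Complex.norm_add_mul_I]
  apply Real.le_sqrt_of_sq_le
  rw [mul_pow, Real.sq_sqrt (by positivity)]
  nlinarith [sq_nonneg x, sq_nonneg m, mul_nonneg (sq_nonneg x) (by nlinarith : 0 ≤ 1 - m^2)]

lemma aux_norm_one (x : ℝ) : 1 ≤ ‖(x : ℂ) + (1 : ℝ) * Complex.I‖ := by
  rw [Complex.norm_add_mul_I]
  apply Real.le_sqrt_of_sq_le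
  nlinarith [sq_nonneg x]

lemma aux_norm_abs (x : ℝ) : |x| ≤ ‖(x : ℂ) + (1 : ℝ) * Complex.I‖ := by
  rw [Complex.norm_add_mul_I]
  apply Real.le_sqrt_of_sq_le
  rw [sq_abs]
  linarith

lemma aux_deriv_bound {c ε ξ x y m u : ℝ} (hc : 0 < c) (hε : 0 < ε) (hε1 : ε < 1) (hy : 0 < y)
    (hm : 0 < m) (hm1 : m ≤ 1) (hu : m ≤ u) :
    ‖((((-c - ε : ℝ) : ℂ) + Complex.I * (ξ : ℂ)) * ((x : ℂ) + y * Complex.I + u * Complex.I) ^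
      ((((-c - ε : ℝ) : ℂ) + Complex.I * (ξ : ℂ)) - 1) * Complex.I)‖ ≤
    (c + 1 + |ξ|) * (m ^ (-(c + 2)) * ‖(x : ℂ) + (1 : ℝ) * Complex.I‖ ^ (-(c + 1)) *
      Real.exp (Real.pi * |ξ|)) := by
  have e1 : ((((-c - ε : ℝ) : ℂ) + Complex.I * (ξ : ℂ)) - 1) =
      ((-c - ε - 1 : ℝ) : ℂ) + Complex.I * (ξ : ℂ) := by push_cast; ring
  have e2 : ((x : ℂ) + y * Complex.I + u * Complex.I) = (x : ℂ) + ((y + u : ℝ) : ℂ) * Complex.I := by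
    push_cast; ring
  rw [norm_mul, norm_mul, Complex.norm_I, mul_one, e1, e2]
  have hs : ‖(((-c - ε : ℝ) : ℂ) + Complex.I * (ξ : ℂ))‖ ≤ c + 1 + |ξ| := by
    refine (norm_add_le _ _).trans ?_
    rw [norm_mul, Complex.norm_I, one_mul, Complex.norm_real, Complex.norm_real, Real.norm_eq_abs,
      Real.norm_eq_abs, abs_of_neg (by linarith)]
    linarith
  have him : 0 < ((x : ℂ) + ((y + u : ℝ) : ℂ) * Complex.I).im := by
    simp; linarith
  have hN1 := aux_norm_one x
  have hge : m * ‖(x : ℂ) + (1 : ℝ) * Complex.I‖ ≤ ‖(x : ℂ) + ((y + u : ℝ) : ℂ) * Complex.I‖ :=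
    (aux_norm_min hm hm1).trans (aux_norm_mono hm.le (by linarith))
  refine mul_le_mul hs ((aux_norm_le him _ ξ).trans ?_) (norm_nonneg _) (by positivity)
  refine mul_le_mul_of_nonneg_right ?_ (Real.exp_pos _).le
  refine (Real.rpow_le_rpow_of_nonpos (by positivity) hge (by linarith)).trans ?_
  rw [Real.mul_rpow hm.le (by positivity)]
  refine mul_le_mul ?_ ?_ (by positivity) (by positivity)
  · exact Real.rpow_le_rpow_of_exponent_ge hm hm1 (by linarith)
  · exact Real.rpow_le_rpow_of_exponent_le hN1 (by linarith)

lemma aux_mvt {c ε ξ x y t : ℝ} (hc : 0 < c) (hε : 0 < ε) (hε1 : ε < 1) (hy : 0 < y)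
    (ht : 0 < t) :
    ‖((x : ℂ) + y * Complex.I + t * Complex.I) ^ (((-c - ε : ℝ) : ℂ) + Complex.I * (ξ : ℂ)) -
      ((x : ℂ) + y * Complex.I + Complex.I) ^ (((-c - ε : ℝ) : ℂ) + Complex.I * (ξ : ℂ))‖ ≤
    (c + 1 + |ξ|) * ((min t 1) ^ (-(c + 2)) * ‖(x : ℂ) + (1 : ℝ) * Complex.I‖ ^ (-(c + 1)) *
      Real.exp (Real.pi * |ξ|)) * |t - 1| := by
  have hm : 0 < min t 1 := lt_min ht one_pos
  have := (convex_Ici (min t 1)).norm_image_sub_le_of_norm_hasDerivWithin_le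
    (f := fun u : ℝ => ((x : ℂ) + y * Complex.I + u * Complex.I) ^
      (((-c - ε : ℝ) : ℂ) + Complex.I * (ξ : ℂ)))
    (f' := fun u : ℝ => ((((-c - ε : ℝ) : ℂ) + Complex.I * (ξ : ℂ)) *
      ((x : ℂ) + y * Complex.I + u * Complex.I) ^
      ((((-c - ε : ℝ) : ℂ) + Complex.I * (ξ : ℂ)) - 1) * Complex.I))
    (x := 1) (y := t) ?_
    (fun u hu => aux_deriv_bound (ξ := ξ) (x := x) hc hε hε1 hy hm (min_le_right _ _) hu)
    (Set.mem_Ici.2 (min_le_right _ _)) (Set.mem_Ici.2 (min_le_left _ _))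
  · simpa using this
  · intro u hu
    have hu0 : 0 < u := hm.trans_le hu
    have h1 : HasDerivAt (fun u : ℝ => (x : ℂ) + y * Complex.I + u * Complex.I) Complex.I u := by
      have := ((Complex.ofRealCLM.hasDerivAt (x := u)).mul_const Complex.I).const_add
        ((x : ℂ) + y * Complex.I)
      simpa using this
    have h2 := (hasDerivAt_id ((x : ℂ) + y * Complex.I + u * Complex.I)).cpow_const
      (c := (((-c - ε : ℝ) : ℂ) + Complex.I * (ξ : ℂ))) (by
        right; simp; linarith)
    rw [mul_one] at h2
    have h3 := h2.comp u h1
    refine HasDerivAt.hasDerivWithinAt ?_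
    exact h3

lemma aux_jensen {α : Type*} [MeasurableSpace α] (μ : Measure α) {p : ℝ} (hp : 1 ≤ p)
    {w h : α → ℝ≥0∞} (hw : Measurable w) (hh : Measurable h) :
    (∫⁻ t, w t * h t ∂μ) ^ p ≤ (∫⁻ t, w t ∂μ) ^ (p - 1) * ∫⁻ t, w t * h t ^ p ∂μ := by
  rcases hp.eq_or_lt with rfl | hp
  · simp
  have hpq := Real.HolderConjugate.conjExponent hp
  have H := ENNReal.lintegral_mul_le_Lp_mul_Lq (μ.withDensity w) hpq (f := h) (g := fun _ => 1)
    hh.aemeasurable measurable_const.aemeasurable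
  have hw' : ∀ g : α → ℝ≥0∞, Measurable g → ∫⁻ t, g t ∂(μ.withDensity w) = ∫⁻ t, w t * g t ∂μ :=
    fun g hg => by rw [lintegral_withDensity_eq_lintegral_mul μ hw hg]; rfl
  simp only [Pi.mul_apply, mul_one, ENNReal.one_rpow] at H
  rw [hw' h hh, hw' (fun t => h t ^ p) (by fun_prop), hw' (fun _ => 1) measurable_const] at H
  simp only [mul_one] at H
  have H2 := ENNReal.rpow_le_rpow H (z := p) (by linarith)
  refine H2.trans (le_of_eq ?_)
  have hp0 : p ≠ 0 := by linarith
  rw [ENNReal.mul_rpow_of_nonneg _ _ (by linarith), ← ENNReal.rpow_mul, ← ENNReal.rpow_mul,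
    one_div, inv_mul_cancel₀ hp0, ENNReal.rpow_one, mul_comm]
  congr 2
  rw [Real.conjExponent]
  have : p - 1 ≠ 0 := by linarith
  field_simp

lemma aux_K_fin {a δ : ℝ} (ha : -1 < a) (hδ : 0 < δ) :
    ∫⁻ x : ℝ, ENNReal.ofReal (‖(x : ℂ) + (1 : ℝ) * Complex.I‖ ^ (-(a + 1 + δ))) *
      ENNReal.ofReal (|x| ^ a) < ⊤ := by
  set G : ℝ → ℝ≥0∞ := fun x => ENNReal.ofReal (‖(x : ℂ) + (1 : ℝ) * Complex.I‖ ^ (-(a + 1 + δ))) *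
      ENNReal.ofReal (|x| ^ a) with hG
  have hneg : ∀ x, G (-x) = G x := by
    intro x
    simp only [hG, Complex.norm_add_mul_I, abs_neg, neg_sq]
  have hpos : ∫⁻ x in Set.Ioi (0 : ℝ), G x < ⊤ := by
    rw [← Set.Ioc_union_Ioi_eq_Ioi (zero_le_one' ℝ)]
    refine (lintegral_union_le _ _ _).trans_lt (ENNReal.add_lt_top.2 ⟨?_, ?_⟩)
    · have h1 : IntegrableOn (fun x : ℝ => x ^ a) (Set.Ioc 0 1) := by
        have := intervalIntegral.intervalIntegrable_rpow' (a := 0) (b := 1) ha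
        rwa [intervalIntegrable_iff_integrableOn_Ioc_of_le zero_le_one] at this
      refine lt_of_le_of_lt ?_ h1.lintegral_lt_top
      refine setLIntegral_mono' measurableSet_Ioc fun x hx => ?_
      rw [hG]
      dsimp only
      rw [abs_of_pos hx.1]
      refine mul_le_of_le_one_left' ?_
      refine ENNReal.ofReal_le_one.2 ?_
      exact Real.rpow_le_one_of_one_le_of_nonpos (aux_norm_one x) (by linarith)
    · have h1 : IntegrableOn (fun x : ℝ => x ^ (-1 - δ)) (Set.Ioi 1) :=
        integrableOn_Ioi_rpow_of_lt (by linarith) one_pos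
      refine lt_of_le_of_lt ?_ h1.lintegral_lt_top
      refine setLIntegral_mono' measurableSet_Ioi fun x hx => ?_
      have hx0 : 0 < x := one_pos.trans hx
      rw [hG]
      dsimp only
      rw [← ENNReal.ofReal_mul (by positivity), abs_of_pos hx0]
      refine ENNReal.ofReal_le_ofReal ?_
      have h2 := aux_norm_abs x
      rw [abs_of_pos hx0] at h2
      calc _ ≤ x ^ (-(a + 1 + δ)) * x ^ a := by
            refine mul_le_mul_of_nonneg_right ?_ (by positivity)
            exact Real.rpow_le_rpow_of_nonpos hx0 h2 (by linarith)
        _ = _ := by rw [← Real.rpow_add hx0]; congr 1; ring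
  have hneg' : ∫⁻ x in Set.Iio (0 : ℝ), G x = ∫⁻ x in Set.Ioi (0 : ℝ), G x := by
    have := (Measure.measurePreserving_neg (volume : Measure ℝ)).setLIntegral_comp_preimage_emb
      (Homeomorph.neg ℝ).measurableEmbedding G (Set.Ioi 0)
    simp only [hneg] at this
    rw [← this]
    congr 2
    ext x; simp
  have : ∫⁻ x, G x = ∫⁻ x in Set.Iio (0 : ℝ) ∪ Set.Ici 0, G x := by
    rw [Set.Iio_union_Ici, setLIntegral_univ]
  rw [this]
  refine (lintegral_union_le _ _ _).trans_lt (ENNReal.add_lt_top.2 ⟨hneg' ▸ hpos, ?_⟩)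
  rwa [setLIntegral_congr Ioi_ae_eq_Ici.symm]

/-- The integral at height `y`. -/
noncomputable def slice (p a : ℝ) (f : ℂ → ℂ) (y : ℝ) : ℝ≥0∞ :=
  ∫⁻ x : ℝ, ‖f ((x : ℂ) + (y : ℂ) * Complex.I)‖ₑ ^ p * ENNReal.ofReal (|x| ^ a)

lemma slice_le {p a : ℝ} (hp : 0 < p) (f : ℂ → ℂ) {y : ℝ} (hy : 0 < y) :
    slice p a f y ≤ hardyNorm p a f ^ p := by
  have : slice p a f y ^ (1 / p) ≤ hardyNorm p a f := le_iSup₂ (f := fun y (_ : y ∈ Set.Ioi (0 : ℝ)) =>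
    (∫⁻ x : ℝ, (‖f ((x : ℂ) + (y : ℂ) * Complex.I)‖₊ : ℝ≥0∞) ^ p *
      ENNReal.ofReal (|x| ^ a)) ^ (1 / p)) y hy
  have h2 := ENNReal.rpow_le_rpow this hp.le
  rwa [← ENNReal.rpow_mul, one_div, inv_mul_cancel₀ hp.ne', ENNReal.rpow_one] at h2

lemma hardy_le {p a : ℝ} (hp : 0 < p) (f : ℂ → ℂ) {B : ℝ≥0∞}
    (h : ∀ y, 0 < y → slice p a f y ≤ B) : hardyNorm p a f ≤ B ^ (1 / p) :=
  iSup₂_le fun y hy => ENNReal.rpow_le_rpow (h y hy) (by positivity)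

lemma aux_test_enorm {c ε ξ x y : ℝ} (hc : 0 < c) (hε : 0 < ε) (hy : 0 < y) :
    ‖testFun c ε ξ ((x : ℂ) + y * Complex.I)‖ ≤
      ‖(x : ℂ) + (1 : ℝ) * Complex.I‖ ^ (-(c + ε)) * Real.exp (Real.pi * |ξ|) := by
  unfold testFun
  have e2 : ((x : ℂ) + y * Complex.I + Complex.I) = (x : ℂ) + ((y + 1 : ℝ) : ℂ) * Complex.I := by
    push_cast; ring
  rw [e2]
  refine (aux_norm_le (by simp; linarith) _ ξ).trans ?_
  refine mul_le_mul_of_nonneg_right ?_ (Real.exp_pos _).le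
  rw [show -c - ε = -(c + ε) by ring]
  exact Real.rpow_le_rpow_of_nonpos (aux_norm_pos x one_pos)
    (aux_norm_mono zero_le_one (by linarith)) (by linarith)

lemma aux_enorm_rpow_le {F : Type*} [NormedAddCommGroup F] {v : F} {b r p C : ℝ} (hp : 0 < p)
    (hb : 0 < b) (hC : 0 ≤ C) (h : ‖v‖ ≤ b ^ r * C) :
    ‖v‖ₑ ^ p ≤ ENNReal.ofReal (C ^ p) * ENNReal.ofReal (b ^ (p * r)) := by
  rw [← ofReal_norm, ENNReal.ofReal_rpow_of_nonneg (norm_nonneg _) hp.le,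
    ← ENNReal.ofReal_mul (by positivity)]
  refine ENNReal.ofReal_le_ofReal ((Real.rpow_le_rpow (norm_nonneg _) h hp.le).trans (le_of_eq ?_))
  rw [Real.mul_rpow (by positivity) hC, ← Real.rpow_mul hb.le, mul_comm, mul_comm r p]

lemma test_fin {p a : ℝ} (hp : 1 ≤ p) (ha : -1 < a) (ξ : ℝ) {ε : ℝ} (hε : 0 < ε) :
    hardyNorm p a (testFun ((a + 1) / p) ε ξ) < ⊤ := by
  have hp0 : 0 < p := by linarith
  have hc : 0 < (a + 1) / p := div_pos (by linarith) hp0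
  set E := Real.exp (Real.pi * |ξ|) with hE
  have key : ∀ y, 0 < y → slice p a (testFun ((a + 1) / p) ε ξ) y ≤ ENNReal.ofReal (E ^ p) *
      ∫⁻ x : ℝ, ENNReal.ofReal (‖(x : ℂ) + (1 : ℝ) * Complex.I‖ ^ (-(a + 1 + p * ε))) *
      ENNReal.ofReal (|x| ^ a) := by
    intro y hy
    rw [← lintegral_const_mul' _ _ ENNReal.ofReal_ne_top]
    refine lintegral_mono fun x => ?_
    dsimp only
    rw [← mul_assoc]
    gcongr
    refine (aux_enorm_rpow_le hp0 (aux_norm_pos x one_pos) (Real.exp_pos _).le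
      (aux_test_enorm hc hε hy)).trans (le_of_eq ?_)
    congr 3
    field_simp
  refine (hardy_le hp0 _ key).trans_lt ?_
  refine ENNReal.rpow_lt_top_of_nonneg (by positivity) ?_
  exact (ENNReal.mul_lt_top ENNReal.ofReal_lt_top (aux_K_fin ha (by positivity))).ne

lemma test_lower {p a : ℝ} (hp : 1 ≤ p) (ha : -1 < a) (ξ : ℝ) :
    ∃ C : ℝ, 0 < C ∧ ∀ ε, 0 < ε → ε < 1 →
      ENNReal.ofReal (C / ε) ≤ hardyNorm p a (testFun ((a + 1) / p) ε ξ) ^ p := by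
  have hp0 : 0 < p := by linarith
  have hc : 0 < (a + 1) / p := div_pos (by linarith) hp0
  set E := Real.exp (-(Real.pi * |ξ|)) with hE
  have hE0 : 0 < E := Real.exp_pos _
  refine ⟨E ^ p * 3 ^ (-(a + 1 + p)) / p, by positivity, fun ε hε hε1 => ?_⟩
  refine le_trans ?_ (slice_le hp0 _ one_pos)
  have h0 : (-1 - p * ε) < -1 := by nlinarith
  have h1 : IntegrableOn (fun x : ℝ => x ^ (-1 - p * ε)) (Set.Ioi 1) :=
    integrableOn_Ioi_rpow_of_lt h0 one_pos
  have h2 := integral_Ioi_rpow_of_lt h0 one_pos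
  have h3 := ofReal_integral_eq_lintegral_ofReal h1 (by
    filter_upwards [ae_restrict_mem measurableSet_Ioi] with x hx
    have : (0 : ℝ) < x := one_pos.trans hx
    show (0 : ℝ) ≤ _
    positivity)
  have h4 : ENNReal.ofReal (E ^ p * 3 ^ (-(a + 1 + p)) / p / ε) =
      ENNReal.ofReal (E ^ p * 3 ^ (-(a + 1 + p))) *
        ∫⁻ x in Set.Ioi (1 : ℝ), ENNReal.ofReal (x ^ (-1 - p * ε)) := by
    rw [← h3, h2, ← ENNReal.ofReal_mul (by positivity)]
    congr 1
    rw [Real.one_rpow]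
    have : -1 - p * ε + 1 = -(p * ε) := by ring
    rw [this]
    field_simp
  rw [h4, ← lintegral_const_mul' _ _ ENNReal.ofReal_ne_top]
  refine le_trans ?_ (setLIntegral_le_lintegral (Set.Ioi 1) _)
  refine setLIntegral_mono' measurableSet_Ioi fun x hx => ?_
  have hx1 : (1 : ℝ) < x := hx
  have hx0 : 0 < x := one_pos.trans hx
  rw [← ofReal_norm, ENNReal.ofReal_rpow_of_nonneg (norm_nonneg _) hp0.le,
    ← ENNReal.ofReal_mul (by positivity), ← ENNReal.ofReal_mul (by positivity), abs_of_pos hx0]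
  refine ENNReal.ofReal_le_ofReal ?_
  have e2 : ((x : ℂ) + (1 : ℝ) * Complex.I + Complex.I) = (x : ℂ) + ((2 : ℝ) : ℂ) * Complex.I := by
    push_cast; ring
  have hlow : (3 * x) ^ (-((a + 1) / p) - ε) * E ≤
      ‖testFun ((a + 1) / p) ε ξ ((x : ℂ) + (1 : ℝ) * Complex.I)‖ := by
    unfold testFun
    rw [e2]
    refine le_trans ?_ (aux_norm_ge (by simp) _ ξ)
    refine mul_le_mul_of_nonneg_right ?_ hE0.le
    refine Real.rpow_le_rpow_of_nonpos (aux_norm_pos x two_pos) ?_ (by linarith)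
    refine (norm_add_le _ _).trans ?_
    rw [norm_mul, Complex.norm_I, Complex.norm_real, Complex.norm_real, Real.norm_eq_abs,
      Real.norm_eq_abs, abs_of_pos hx0, abs_of_pos two_pos]
    linarith
  have hlow2 := Real.rpow_le_rpow (by positivity) hlow hp0.le
  refine le_trans ?_ (mul_le_mul_of_nonneg_right hlow2 (by positivity))
  rw [Real.mul_rpow (by positivity) hE0.le, ← Real.rpow_mul (by positivity),
    Real.mul_rpow (by norm_num) hx0.le]
  have e3 : (-((a + 1) / p) - ε) * p = -(a + 1 + p * ε) := by field_simp; ring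
  rw [e3]
  have e4 : x ^ (-1 - p * ε) = x ^ (-(a + 1 + p * ε)) * x ^ a := by
    rw [← Real.rpow_add hx0]; congr 1; ring
  rw [e4]
  have e5 : (3 : ℝ) ^ (-(a + 1 + p)) ≤ 3 ^ (-(a + 1 + p * ε)) :=
    Real.rpow_le_rpow_of_exponent_le (by norm_num) (by nlinarith)
  calc _ = (3 : ℝ) ^ (-(a + 1 + p)) * (E ^ p * (x ^ (-(a + 1 + p * ε)) * x ^ a)) := by ring
    _ ≤ 3 ^ (-(a + 1 + p * ε)) * (E ^ p * (x ^ (-(a + 1 + p * ε)) * x ^ a)) :=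
        mul_le_mul_of_nonneg_right e5 (by positivity)
    _ = _ := by ring

lemma test_scale {p a : ℝ} (hp : 1 ≤ p) (ξ ε : ℝ) {t y : ℝ} (ht : 0 < t) (hy : 0 < y) :
    ∫⁻ x : ℝ, ‖(t : ℂ) ^ (ε : ℂ) * ((x : ℂ) + y * Complex.I + t * Complex.I) ^
      (((-((a + 1) / p) - ε : ℝ) : ℂ) + Complex.I * (ξ : ℂ))‖ₑ ^ p * ENNReal.ofReal (|x| ^ a) =
    slice p a (testFun ((a + 1) / p) ε ξ) (y / t) := by
  have hp0 : 0 < p := by linarith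
  have ht0 : (t : ℂ) ≠ 0 := by exact_mod_cast ht.ne'
  have hmeas : Measurable (fun x : ℝ => ‖testFun ((a + 1) / p) ε ξ
      ((x : ℂ) + ((y / t : ℝ) : ℂ) * Complex.I)‖ₑ ^ p * ENNReal.ofReal (|x| ^ a)) := by
    unfold testFun; fun_prop
  unfold slice
  conv_rhs => rw [← Real.smul_map_volume_mul_left (inv_pos.2 ht).ne', lintegral_smul_measure,
    lintegral_map hmeas (by fun_prop)]
  rw [smul_eq_mul, ← lintegral_const_mul' _ _ ENNReal.ofReal_ne_top]
  refine lintegral_congr fun x => ?_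
  have e1 : (((t⁻¹ * x : ℝ) : ℂ) + ((y / t : ℝ) : ℂ) * Complex.I) =
      ((x : ℂ) + y * Complex.I) / (t : ℂ) := by
    push_cast; field_simp
  rw [e1, aux_scale ht (by simpa using hy), enorm_mul ((t : ℂ) ^ ((((a + 1) / p : ℝ) : ℂ) - Complex.I * ξ)),
    ENNReal.mul_rpow_of_nonneg _ _ hp0.le]
  have e2 : ‖(t : ℂ) ^ ((((a + 1) / p : ℝ) : ℂ) - Complex.I * ξ)‖ₑ ^ p =
      ENNReal.ofReal (t ^ (a + 1)) := by
    rw [← ofReal_norm, Complex.norm_cpow_eq_rpow_re_of_pos ht,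
      ENNReal.ofReal_rpow_of_nonneg (by positivity) hp0.le, ← Real.rpow_mul ht.le]
    congr 2
    simp
    field_simp
  rw [e2]
  have e3 : ENNReal.ofReal (|x| ^ a) =
      ENNReal.ofReal |t⁻¹| * (ENNReal.ofReal (t ^ (a + 1)) * ENNReal.ofReal (|t⁻¹ * x| ^ a)) := by
    rw [← ENNReal.ofReal_mul (by positivity), ← ENNReal.ofReal_mul (by positivity)]
    congr 1
    rw [abs_mul, abs_of_pos (inv_pos.2 ht), Real.mul_rpow (by positivity) (by positivity),
      Real.inv_rpow ht.le, Real.rpow_add ht, Real.rpow_one]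
    have := (Real.rpow_pos_of_pos ht a).ne'
    field_simp
  rw [e3]
  ring

/-- The kernel difference. -/
noncomputable def gker (c ε ξ : ℝ) (z : ℂ) (t : ℝ) : ℂ :=
  (t : ℂ) ^ (ε : ℂ) * (z + t * Complex.I) ^ (((-c - ε : ℝ) : ℂ) + Complex.I * (ξ : ℂ)) -
    testFun c ε ξ z

lemma D_le {c ε ξ : ℝ} (hc : 0 < c) (hε : 0 < ε) {φ : ℝ → ℂ} (hφm : Measurable φ)
    (hφ : IntegrableOn (fun t => ‖φ t‖ * t ^ (c - 1)) (Set.Ioi (0 : ℝ))) {z : ℂ} (hz : 0 < z.im) :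
    ‖HphiHol φ (testFun c ε ξ) z - khat φ c ξ * testFun c ε ξ z‖ₑ ≤
      ∫⁻ t in Set.Ioi (0 : ℝ), ENNReal.ofReal (‖φ t‖ * t ^ (c - 1)) * ‖gker c ε ξ z t‖ₑ := by
  set ψ : ℝ → ℂ := fun t => φ t * (t : ℂ) ^ ((c : ℂ) - 1 - Complex.I * (ξ : ℂ)) with hψ
  have hψm : Measurable ψ := by rw [hψ]; fun_prop
  have hψn : ∀ t, 0 < t → ‖ψ t‖ = ‖φ t‖ * t ^ (c - 1) := by
    intro t ht
    simp only [hψ]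
    rw [norm_mul, Complex.norm_cpow_eq_rpow_re_of_pos ht]
    simp
  have hψi : IntegrableOn ψ (Set.Ioi 0) := by
    refine Integrable.mono' hφ hψm.aestronglyMeasurable ?_
    filter_upwards [ae_restrict_mem measurableSet_Ioi] with t ht
    exact (hψn t ht).le
  set q : ℝ → ℂ := fun t => (t : ℂ) ^ (ε : ℂ) *
    (z + t * Complex.I) ^ (((-c - ε : ℝ) : ℂ) + Complex.I * (ξ : ℂ)) with hq
  have hqm : Measurable q := by rw [hq]; fun_prop
  have hqb : ∀ t, 0 < t → ‖q t‖ ≤ z.im ^ (-c) * Real.exp (Real.pi * |ξ|) := by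
    intro t ht
    simp only [hq]
    have him : (z + t * Complex.I).im = z.im + t := by simp
    have hn : z.im + t ≤ ‖z + t * Complex.I‖ := by
      rw [← him]; exact (le_abs_self _).trans (Complex.abs_im_le_norm _)
    have hn0 : 0 < ‖z + t * Complex.I‖ := by linarith
    rw [norm_mul, Complex.norm_cpow_eq_rpow_re_of_pos ht, Complex.ofReal_re]
    calc _ ≤ t ^ ε * (‖z + t * Complex.I‖ ^ (-c - ε) * Real.exp (Real.pi * |ξ|)) := by
          gcongr
          exact aux_norm_le (by rw [him]; linarith) _ ξ
      _ = t ^ ε * ‖z + t * Complex.I‖ ^ (-ε) * ‖z + t * Complex.I‖ ^ (-c) *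
          Real.exp (Real.pi * |ξ|) := by
          rw [show -c - ε = -ε + -c by ring, Real.rpow_add hn0]; ring
      _ ≤ t ^ ε * t ^ (-ε) * z.im ^ (-c) * Real.exp (Real.pi * |ξ|) := by
          have h1 : ‖z + t * Complex.I‖ ^ (-ε) ≤ t ^ (-ε) :=
            Real.rpow_le_rpow_of_nonpos ht (by linarith) (by linarith)
          have h2 : ‖z + t * Complex.I‖ ^ (-c) ≤ z.im ^ (-c) :=
            Real.rpow_le_rpow_of_nonpos hz (by linarith) (by linarith)
          gcongr
      _ = _ := by rw [← Real.rpow_add ht]; simp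
  have hi1 : IntegrableOn (fun t => ψ t * q t) (Set.Ioi 0) := by
    refine Integrable.mul_bdd (c := z.im ^ (-c) * Real.exp (Real.pi * |ξ|)) hψi
      hqm.aestronglyMeasurable ?_
    filter_upwards [ae_restrict_mem measurableSet_Ioi] with t ht
    exact hqb t ht
  have hi2 : IntegrableOn (fun t => ψ t * testFun c ε ξ z) (Set.Ioi 0) := hψi.mul_const _
  have e1 : HphiHol φ (testFun c ε ξ) z = ∫ t in Set.Ioi (0 : ℝ), ψ t * q t := by
    unfold HphiHol
    refine setIntegral_congr_fun measurableSet_Ioi fun t ht => ?_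
    have ht' : (0 : ℝ) < t := ht
    have ht0 : (t : ℂ) ≠ 0 := by exact_mod_cast ht'.ne'
    rw [aux_scale ht' hz]
    simp only [hψ, hq]
    have : (t : ℂ) ^ ((c : ℂ) - 1 - Complex.I * (ξ : ℂ)) =
        (t : ℂ) ^ ((c : ℂ) - Complex.I * (ξ : ℂ)) / t := by
      rw [show (c : ℂ) - 1 - Complex.I * (ξ : ℂ) = (c : ℂ) - Complex.I * (ξ : ℂ) - 1 by ring,
        Complex.cpow_sub _ _ ht0, Complex.cpow_one]
    rw [this]
    ring
  have e2 : khat φ c ξ * testFun c ε ξ z = ∫ t in Set.Ioi (0 : ℝ), ψ t * testFun c ε ξ z := by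
    rw [integral_mul_const]; rfl
  rw [e1, e2, ← integral_sub hi1 hi2]
  refine (enorm_integral_le_lintegral_enorm _).trans ?_
  refine setLIntegral_mono' measurableSet_Ioi fun t ht => ?_
  rw [← mul_sub, enorm_mul, ← hψn t ht, ofReal_norm]
  exact le_rfl

/-- The `ε`-independent constant. -/
noncomputable def Qfun (p a ξ : ℝ) (t : ℝ) : ℝ≥0∞ :=
  ENNReal.ofReal ((((a + 1) / p + 1 + |ξ|) * ((min t 1) ^ (-((a + 1) / p + 2)) *
      Real.exp (Real.pi * |ξ|)) * |t - 1| * max 1 t) ^ p) *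
  ∫⁻ x : ℝ, ENNReal.ofReal (‖(x : ℂ) + (1 : ℝ) * Complex.I‖ ^ (-(a + 1 + p))) *
      ENNReal.ofReal (|x| ^ a)

lemma gker_bound1 {p a : ℝ} (hp : 1 ≤ p) (ξ ε : ℝ) {t y : ℝ} (ht : 0 < t) (hy : 0 < y) :
    slice p a (fun z => gker ((a + 1) / p) ε ξ z t) y ≤
      2 ^ (p - 1) * (2 * hardyNorm p a (testFun ((a + 1) / p) ε ξ) ^ p) := by
  have hp0 : 0 < p := by linarith
  calc slice p a (fun z => gker ((a + 1) / p) ε ξ z t) y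
      ≤ ∫⁻ x : ℝ, 2 ^ (p - 1) * (‖(t : ℂ) ^ (ε : ℂ) * ((x : ℂ) + y * Complex.I + t * Complex.I) ^
      (((-((a + 1) / p) - ε : ℝ) : ℂ) + Complex.I * (ξ : ℂ))‖ₑ ^ p * ENNReal.ofReal (|x| ^ a) +
        ‖testFun ((a + 1) / p) ε ξ ((x : ℂ) + y * Complex.I)‖ₑ ^ p * ENNReal.ofReal (|x| ^ a)) := by
        refine lintegral_mono fun x => ?_
        dsimp only
        rw [← add_mul, ← mul_assoc]
        gcongr
        refine le_trans ?_ (ENNReal.rpow_add_le_mul_rpow_add_rpow _ _ hp)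
        refine ENNReal.rpow_le_rpow ?_ hp0.le
        exact enorm_sub_le
    _ = 2 ^ (p - 1) * (slice p a (testFun ((a + 1) / p) ε ξ) (y / t) +
          slice p a (testFun ((a + 1) / p) ε ξ) y) := by
        rw [lintegral_const_mul' _ _ (ENNReal.rpow_ne_top_of_nonneg (by linarith) (by simp)),
          lintegral_add_left (by fun_prop), test_scale hp ξ ε ht hy]
        rfl
    _ ≤ _ := by
        rw [two_mul]
        gcongr
        · exact slice_le hp0 _ (by positivity)
        · exact slice_le hp0 _ hy

lemma gker_bound2 {p a : ℝ} (hp : 1 ≤ p) (ha : -1 < a) (ξ : ℝ) {ε : ℝ} (hε : 0 < ε) (hε1 : ε < 1)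
    {t y : ℝ} (ht : 0 < t) (hy : 0 < y) :
    slice p a (fun z => gker ((a + 1) / p) ε ξ z t) y ≤
      2 ^ (p - 1) * (‖(t : ℂ) ^ (ε : ℂ) - 1‖ₑ ^ p *
        hardyNorm p a (testFun ((a + 1) / p) ε ξ) ^ p + Qfun p a ξ t) := by
  have hp0 : 0 < p := by linarith
  have hc : 0 < (a + 1) / p := div_pos (by linarith) hp0
  have hm : 0 < min t 1 := lt_min ht one_pos
  set R := (((a + 1) / p + 1 + |ξ|) * ((min t 1) ^ (-((a + 1) / p + 2)) *
      Real.exp (Real.pi * |ξ|)) * |t - 1| * max 1 t) with hR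
  calc slice p a (fun z => gker ((a + 1) / p) ε ξ z t) y
      ≤ ∫⁻ x : ℝ, 2 ^ (p - 1) * (‖(t : ℂ) ^ (ε : ℂ) - 1‖ₑ ^ p *
        (‖testFun ((a + 1) / p) ε ξ ((x : ℂ) + y * Complex.I)‖ₑ ^ p * ENNReal.ofReal (|x| ^ a)) +
        ENNReal.ofReal (R ^ p) *
        (ENNReal.ofReal (‖(x : ℂ) + (1 : ℝ) * Complex.I‖ ^ (-(a + 1 + p))) *
          ENNReal.ofReal (|x| ^ a))) := by
        refine lintegral_mono fun x => ?_
        dsimp only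
        rw [← mul_assoc (_ ^ p) (_ ^ p), ← mul_assoc (ENNReal.ofReal (R ^ p)), ← add_mul,
          ← mul_assoc, ← ENNReal.mul_rpow_of_nonneg _ _ hp0.le, ← enorm_mul]
        gcongr
        have e1 : gker ((a + 1) / p) ε ξ ((x : ℂ) + y * Complex.I) t =
            ((t : ℂ) ^ (ε : ℂ) - 1) * testFun ((a + 1) / p) ε ξ ((x : ℂ) + y * Complex.I) +
            (t : ℂ) ^ (ε : ℂ) * (((x : ℂ) + y * Complex.I + t * Complex.I) ^
              (((-((a + 1) / p) - ε : ℝ) : ℂ) + Complex.I * (ξ : ℂ)) -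
              ((x : ℂ) + y * Complex.I + Complex.I) ^
              (((-((a + 1) / p) - ε : ℝ) : ℂ) + Complex.I * (ξ : ℂ))) := by
          unfold gker testFun; ring
        rw [e1]
        refine (ENNReal.rpow_le_rpow (enorm_add_le _ _) hp0.le).trans ?_
        refine (ENNReal.rpow_add_le_mul_rpow_add_rpow _ _ hp).trans ?_
        gcongr
        refine (aux_enorm_rpow_le (b := ‖(x : ℂ) + (1 : ℝ) * Complex.I‖) (r := -((a + 1) / p + 1))
          (C := R) hp0 (aux_norm_pos x one_pos) (by positivity) ?_).trans (le_of_eq ?_)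
        · rw [norm_mul, Complex.norm_cpow_eq_rpow_re_of_pos ht, Complex.ofReal_re]
          have h1 : t ^ ε ≤ max 1 t := by
            rcases le_total t 1 with h | h
            · exact (Real.rpow_le_one ht.le h hε.le).trans (le_max_left _ _)
            · refine le_trans ?_ (le_max_right _ _)
              simpa using Real.rpow_le_rpow_of_exponent_le h hε1.le
          refine (mul_le_mul h1 (aux_mvt (ξ := ξ) (x := x) hc hε hε1 hy ht) (norm_nonneg _)
            (by positivity)).trans (le_of_eq ?_)
          rw [hR]; ring
        · congr 3
          field_simp
    _ = 2 ^ (p - 1) * (‖(t : ℂ) ^ (ε : ℂ) - 1‖ₑ ^ p *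
          slice p a (testFun ((a + 1) / p) ε ξ) y + Qfun p a ξ t) := by
        rw [lintegral_const_mul' _ _ (ENNReal.rpow_ne_top_of_nonneg (by linarith) (by simp)),
          lintegral_add_left (by unfold testFun; fun_prop),
          lintegral_const_mul' _ _ (ENNReal.rpow_ne_top_of_nonneg hp0.le (by simp)),
          lintegral_const_mul' _ _ ENNReal.ofReal_ne_top]
        rfl
    _ ≤ _ := by
        gcongr
        exact slice_le hp0 _ hy

/-- The dominated majorant. -/
noncomputable def Hfun (p a ξ ε t : ℝ) : ℝ≥0∞ :=
  2 ^ (p - 1) * min 2 (‖(t : ℂ) ^ (ε : ℂ) - 1‖ₑ ^ p +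
    Qfun p a ξ t / hardyNorm p a (testFun ((a + 1) / p) ε ξ) ^ p)

lemma Q_meas (p a ξ : ℝ) : Measurable (Qfun p a ξ) := by
  unfold Qfun; fun_prop

lemma H_meas (p a ξ ε : ℝ) : Measurable (Hfun p a ξ ε) := by
  have := Q_meas p a ξ
  unfold Hfun; fun_prop

lemma test_pos {p a : ℝ} (hp : 1 ≤ p) (ha : -1 < a) (ξ : ℝ) {ε : ℝ} (hε : 0 < ε) (hε1 : ε < 1) :
    hardyNorm p a (testFun ((a + 1) / p) ε ξ) ≠ 0 := by
  intro h
  obtain ⟨C, hC, h2⟩ := test_lower hp ha ξ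
  have := h2 ε hε hε1
  rw [h, ENNReal.zero_rpow_of_pos (by linarith)] at this
  simp only [nonpos_iff_eq_zero, ENNReal.ofReal_eq_zero] at this
  have : 0 < C / ε := by positivity
  linarith

lemma gker_bound {p a : ℝ} (hp : 1 ≤ p) (ha : -1 < a) (ξ : ℝ) {ε : ℝ} (hε : 0 < ε) (hε1 : ε < 1)
    {t y : ℝ} (ht : 0 < t) (hy : 0 < y) :
    slice p a (fun z => gker ((a + 1) / p) ε ξ z t) y ≤
      Hfun p a ξ ε t * hardyNorm p a (testFun ((a + 1) / p) ε ξ) ^ p := by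
  have hp0 : 0 < p := by linarith
  unfold Hfun
  set F := hardyNorm p a (testFun ((a + 1) / p) ε ξ) with hF
  have hF0 : F ^ p ≠ 0 := by
    simpa [ENNReal.rpow_eq_zero_iff, hp0, hp0.le, hp0.not_gt] using test_pos hp ha ξ hε hε1
  have hFt : F ^ p ≠ ⊤ := ENNReal.rpow_ne_top_of_nonneg hp0.le (test_fin hp ha ξ hε).ne
  rw [mul_assoc]
  rcases min_choice 2 (‖(t : ℂ) ^ (ε : ℂ) - 1‖ₑ ^ p + Qfun p a ξ t / F ^ p) with h | h
  · rw [h]; exact gker_bound1 hp ξ ε ht hy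
  · rw [h, add_mul, ENNReal.div_mul_cancel hF0 hFt]; exact gker_bound2 hp ha ξ hε hε1 ht hy

lemma Q_fin {p a : ℝ} (hp : 1 ≤ p) (ha : -1 < a) (ξ t : ℝ) : Qfun p a ξ t ≠ ⊤ := by
  unfold Qfun
  exact (ENNReal.mul_lt_top ENNReal.ofReal_lt_top (aux_K_fin ha (by linarith))).ne

lemma H_tendsto {p a : ℝ} (hp : 1 ≤ p) (ha : -1 < a) (ξ : ℝ) {t : ℝ} (ht : 0 < t) :
    Tendsto (fun ε => Hfun p a ξ ε t) (𝓝[Set.Ioo (0 : ℝ) 1] 0) (𝓝 0) := by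
  have hp0 : 0 < p := by linarith
  have ht0 : (t : ℂ) ≠ 0 := by exact_mod_cast ht.ne'
  have h1 : Tendsto (fun ε : ℝ => ‖(t : ℂ) ^ (ε : ℂ) - 1‖ₑ ^ p) (𝓝[Set.Ioo (0 : ℝ) 1] 0) (𝓝 0) := by
    have hcont : Continuous (fun ε : ℝ => ‖(t : ℂ) ^ (ε : ℂ) - 1‖ₑ ^ p) := by
      have : Continuous (fun ε : ℝ => (t : ℂ) ^ (ε : ℂ)) :=
        Continuous.const_cpow Complex.continuous_ofReal (Or.inl ht0)
      exact (ENNReal.continuous_rpow_const).comp ((this.sub continuous_const).enorm)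
    have := (hcont.tendsto 0).mono_left (nhdsWithin_le_nhds (s := Set.Ioo (0 : ℝ) 1))
    simpa [hp0] using this
  have h2 : Tendsto (fun ε : ℝ => hardyNorm p a (testFun ((a + 1) / p) ε ξ) ^ p)
      (𝓝[Set.Ioo (0 : ℝ) 1] 0) (𝓝 ⊤) := by
    obtain ⟨C, hC, h⟩ := test_lower hp ha ξ
    refine tendsto_nhds_top_mono (f := fun ε : ℝ => ENNReal.ofReal (C / ε)) ?_ ?_
    · refine ENNReal.tendsto_ofReal_atTop.comp ?_
      have : Tendsto (fun ε : ℝ => ε⁻¹) (𝓝[Set.Ioo (0 : ℝ) 1] 0) atTop :=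
        tendsto_inv_nhdsGT_zero.mono_left (nhdsWithin_mono _ fun x hx => hx.1)
      exact this.const_mul_atTop hC
    · filter_upwards [self_mem_nhdsWithin] with ε hε
      exact h ε hε.1 hε.2
  have h3 := ENNReal.Tendsto.const_div (a := Qfun p a ξ t) h2 (Or.inr (Q_fin hp ha ξ t))
  rw [ENNReal.div_top] at h3
  have h4 := h1.add h3
  rw [add_zero] at h4
  have h5 := (tendsto_const_nhds (x := (2 : ℝ≥0∞))).min h4
  have h6 := ENNReal.Tendsto.const_mul (a := (2 : ℝ≥0∞) ^ (p - 1)) h5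
    (Or.inr (ENNReal.rpow_ne_top_of_nonneg (by linarith) (by simp)))
  simpa [Hfun] using h6

lemma D_slice {p a : ℝ} (hp : 1 ≤ p) (ha : -1 < a) {φ : ℝ → ℂ} (hφm : Measurable φ)
    (hφ : IntegrableOn (fun t => ‖φ t‖ * t ^ ((a + 1) / p - 1)) (Set.Ioi (0 : ℝ)))
    (ξ : ℝ) {ε : ℝ} (hε : 0 < ε) (hε1 : ε < 1) {y : ℝ} (hy : 0 < y) :
    slice p a (fun z => HphiHol φ (testFun ((a + 1) / p) ε ξ) z -
            khat φ ((a + 1) / p) ξ * testFun ((a + 1) / p) ε ξ z) y ≤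
    (∫⁻ t in Set.Ioi (0 : ℝ), ENNReal.ofReal (‖φ t‖ * t ^ ((a + 1) / p - 1))) ^ (p - 1) *
      (∫⁻ t in Set.Ioi (0 : ℝ), ENNReal.ofReal (‖φ t‖ * t ^ ((a + 1) / p - 1)) * Hfun p a ξ ε t) *
      hardyNorm p a (testFun ((a + 1) / p) ε ξ) ^ p := by
  have hp0 : 0 < p := by linarith
  have hc : 0 < (a + 1) / p := div_pos (by linarith) hp0
  set F := hardyNorm p a (testFun ((a + 1) / p) ε ξ) with hF
  have hFt : F ^ p ≠ ⊤ := ENNReal.rpow_ne_top_of_nonneg hp0.le (test_fin hp ha ξ hε).ne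
  set w : ℝ → ℝ≥0∞ := fun t => ENNReal.ofReal (‖φ t‖ * t ^ ((a + 1) / p - 1)) with hw
  have hwm : Measurable w := by rw [hw]; fun_prop
  set M := ∫⁻ t in Set.Ioi (0 : ℝ), w t with hM
  have hMt : M ^ (p - 1) ≠ ⊤ :=
    ENNReal.rpow_ne_top_of_nonneg (by linarith) hφ.lintegral_lt_top.ne
  have hgm : Measurable (fun q : ℝ × ℝ => gker ((a + 1) / p) ε ξ ((q.1 : ℂ) + y * Complex.I) q.2) := by
    unfold gker testFun; fun_prop
  calc slice p a (fun z => HphiHol φ (testFun ((a + 1) / p) ε ξ) z -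
            khat φ ((a + 1) / p) ξ * testFun ((a + 1) / p) ε ξ z) y
      ≤ ∫⁻ x : ℝ, M ^ (p - 1) * ∫⁻ t in Set.Ioi (0 : ℝ),
          w t * (‖gker ((a + 1) / p) ε ξ ((x : ℂ) + y * Complex.I) t‖ₑ ^ p *
            ENNReal.ofReal (|x| ^ a)) := by
        refine lintegral_mono fun x => ?_
        dsimp only
        have hg1 : Measurable (fun t => gker ((a + 1) / p) ε ξ ((x : ℂ) + y * Complex.I) t) :=
          hgm.comp (measurable_const.prodMk measurable_id)
        simp_rw [← mul_assoc (w _)]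
        rw [lintegral_mul_const' _ _ ENNReal.ofReal_ne_top, ← mul_assoc]
        gcongr
        refine le_trans ?_ (aux_jensen _ hp hwm hg1.enorm)
        refine ENNReal.rpow_le_rpow ?_ hp0.le
        exact D_le hc hε hφm hφ (by simpa using hy)
    _ = M ^ (p - 1) * ∫⁻ t in Set.Ioi (0 : ℝ),
          w t * slice p a (fun z => gker ((a + 1) / p) ε ξ z t) y := by
        rw [lintegral_const_mul' _ _ hMt, lintegral_lintegral_swap]
        · congr 1
          refine lintegral_congr fun t => ?_
          exact lintegral_const_mul' _ _ ENNReal.ofReal_ne_top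
        · refine Measurable.aemeasurable ?_
          simp only [Function.uncurry_def]
          exact (hwm.comp measurable_snd).mul ((hgm.enorm.pow_const p).mul (by fun_prop))
    _ ≤ M ^ (p - 1) * ∫⁻ t in Set.Ioi (0 : ℝ), w t * Hfun p a ξ ε t * F ^ p := by
        gcongr 1
        refine setLIntegral_mono' measurableSet_Ioi fun t ht => ?_
        rw [mul_assoc]
        gcongr
        exact gker_bound hp ha ξ hε hε1 ht hy
    _ = _ := by
        rw [lintegral_mul_const' _ _ hFt, mul_assoc]

/-- Each `f_{ε,ξ}` has finite weighted Hardy norm and, for fixed `ξ`,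
`‖ℋ_φ f_{ε,ξ} − k̂_{a,p}(ξ) f_{ε,ξ}‖ / ‖f_{ε,ξ}‖ → 0` as `ε → 0⁺` in `(0,1)`. -/
theorem stmt10 (p a : ℝ) (hp : 1 ≤ p) (ha : -1 < a) (φ : ℝ → ℂ) (hφm : Measurable φ)
    (hφ : IntegrableOn (fun t => ‖φ t‖ * t ^ ((a + 1) / p - 1)) (Set.Ioi (0 : ℝ)))
    (ξ : ℝ) :
    (∀ ε ∈ Set.Ioo (0 : ℝ) 1, hardyNorm p a (testFun ((a + 1) / p) ε ξ) < ⊤) ∧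
    Tendsto (fun ε : ℝ =>
        hardyNorm p a (fun z => HphiHol φ (testFun ((a + 1) / p) ε ξ) z -
            khat φ ((a + 1) / p) ξ * testFun ((a + 1) / p) ε ξ z) /
          hardyNorm p a (testFun ((a + 1) / p) ε ξ))
      (𝓝[Set.Ioo (0 : ℝ) 1] 0) (𝓝 (0 : ℝ≥0∞)) := by
  have hp0 : 0 < p := by linarith
  refine ⟨fun ε hε => test_fin hp ha ξ hε.1, ?_⟩
  set w : ℝ → ℝ≥0∞ := fun t => ENNReal.ofReal (‖φ t‖ * t ^ ((a + 1) / p - 1)) with hw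
  have hwm : Measurable w := by rw [hw]; fun_prop
  set M := ∫⁻ t in Set.Ioi (0 : ℝ), w t with hM
  have hMf : M ≠ ⊤ := hφ.lintegral_lt_top.ne
  have hMt : M ^ (p - 1) ≠ ⊤ := ENNReal.rpow_ne_top_of_nonneg (by linarith) hMf
  have h2t : (2 : ℝ≥0∞) ^ (p - 1) * 2 ≠ ⊤ :=
    ENNReal.mul_ne_top (ENNReal.rpow_ne_top_of_nonneg (by linarith) (by simp)) (by simp)
  have hlim : Tendsto (fun ε => ∫⁻ t in Set.Ioi (0 : ℝ), w t * Hfun p a ξ ε t)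
      (𝓝[Set.Ioo (0 : ℝ) 1] 0) (𝓝 (∫⁻ t in Set.Ioi (0 : ℝ), 0)) := by
    refine tendsto_lintegral_filter_of_dominated_convergence
      (fun t => w t * ((2 : ℝ≥0∞) ^ (p - 1) * 2)) ?_ ?_ ?_ ?_
    · exact Eventually.of_forall fun ε => hwm.mul (H_meas p a ξ ε)
    · refine Eventually.of_forall fun ε => Eventually.of_forall fun t => ?_
      unfold Hfun
      gcongr
      exact min_le_left _ _
    · rw [lintegral_mul_const' _ _ h2t]
      exact ENNReal.mul_ne_top hMf h2t
    · filter_upwards [ae_restrict_mem measurableSet_Ioi] with t ht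
      have := ENNReal.Tendsto.const_mul (a := w t) (H_tendsto hp ha ξ ht)
        (Or.inr ENNReal.ofReal_ne_top)
      simpa using this
  rw [lintegral_zero] at hlim
  have hlim2 := ENNReal.Tendsto.const_mul (a := M ^ (p - 1)) hlim (Or.inr hMt)
  rw [mul_zero] at hlim2
  have hlim3 := hlim2.ennrpow_const (1 / p)
  rw [ENNReal.zero_rpow_of_pos (by positivity)] at hlim3
  refine tendsto_of_tendsto_of_tendsto_of_le_of_le' tendsto_const_nhds hlim3
    (Eventually.of_forall fun _ => zero_le) ?_
  filter_upwards [self_mem_nhdsWithin] with ε hε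
  have hF0 := test_pos hp ha ξ hε.1 hε.2
  refine ENNReal.div_le_of_le_mul ?_
  refine (hardy_le hp0 _ fun y hy => D_slice hp ha hφm hφ ξ hε.1 hε.2 hy).trans (le_of_eq ?_)
  rw [ENNReal.mul_rpow_of_nonneg _ _ (by positivity : 0 ≤ 1 / p), ← ENNReal.rpow_mul, mul_one_div,
    div_self hp0.ne', ENNReal.rpow_one]
end

section
/- Let 1 ≤ p < ∞, a > −1, and let φ : (0,∞) → ℂ be measurable with ∫₀^∞ |φ(t)| t^{(a+1)/p − 1} dt < ∞. If C ≥ 0 is a constant such that ‖ℋ_φ f‖_{H^p_{|·|^a}} ≤ C ‖f‖_{H^p_{|·|^a}} for every holomorphic f on 𝕌 with ‖f‖_{H^p_{|·|^a}} < ∞, then sup_{ξ ∈ ℝ} |k̂_{a,p}(ξ)| ≤ C. -/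
open MeasureTheory
open scoped ENNReal NNReal

lemma subst_half (l Y : ℝ) (hl : 0 < l) (hY : 0 < Y) (G : ℝ → ℝ≥0∞) :
    ∫⁻ x in Set.Ioi (0:ℝ), G x =
      ∫⁻ r : ℝ, ENNReal.ofReal (l * (Y * Real.exp (l * r))) * G (Y * Real.exp (l * r)) := by
  have himg : (fun r : ℝ => Y * Real.exp (l * r)) '' Set.univ = Set.Ioi 0 := by
    ext x
    simp only [Set.image_univ, Set.mem_range, Set.mem_Ioi]
    constructor
    · rintro ⟨r, rfl⟩; positivity
    · intro hx
      refine ⟨Real.log (x / Y) / l, ?_⟩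
      rw [mul_div_cancel₀ _ hl.ne', Real.exp_log (by positivity)]
      field_simp
  have := lintegral_image_eq_lintegral_abs_deriv_mul (s := Set.univ)
    (f := fun r : ℝ => Y * Real.exp (l * r)) (f' := fun r => l * (Y * Real.exp (l * r)))
    MeasurableSet.univ (fun r _ => by
      have h1 : HasDerivAt (fun r : ℝ => l * r) l r := by
        simpa using (hasDerivAt_id r).const_mul l
      have := (h1.exp.const_mul Y)
      refine HasDerivAt.hasDerivWithinAt ?_
      exact this.congr_deriv (by ring)) (by
      intro x _ y _ h
      simp only at h
      have := Real.exp_injective (mul_left_cancel₀ hY.ne' h)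
      exact mul_left_cancel₀ hl.ne' this) G
  rw [himg, Measure.restrict_univ] at this
  rw [this]
  congr 1; ext r
  rw [abs_of_pos (by positivity)]

lemma split_real (G : ℝ → ℝ≥0∞) :
    ∫⁻ x : ℝ, G x = (∫⁻ x in Set.Ioi (0:ℝ), G x) + ∫⁻ x in Set.Ioi (0:ℝ), G (-x) := by
  rw [← lintegral_add_compl G (measurableSet_Ioi (a := (0:ℝ)))]
  congr 1
  rw [Set.compl_Ioi, ← setLIntegral_congr (Iio_ae_eq_Iic (a := (0:ℝ)))]
  have := (Measure.measurePreserving_neg (volume : Measure ℝ)).setLIntegral_comp_preimage_emb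
    (MeasurableEquiv.neg ℝ).measurableEmbedding G (Set.Iio 0)
  rw [← this]
  congr 2
  ext x; simp

/-- the scaled modulus -/
noncomputable def QQ (g : ℂ → ℂ) (c y l Y σ r : ℝ) : ℝ :=
  ‖g (((σ * (Y * Real.exp (l * r)) : ℝ) : ℂ) + (y : ℂ) * Complex.I)‖ * (Y * Real.exp (l * r)) ^ c

lemma norm_subst (g : ℂ → ℂ) (p a c y l Y : ℝ) (hp : 0 < p) (hc : c * p = a + 1) (hl : 0 < l)
    (hY : 0 < Y) :
    ∫⁻ x : ℝ, (‖g ((x : ℂ) + (y : ℂ) * Complex.I)‖₊ : ℝ≥0∞) ^ p * ENNReal.ofReal (|x| ^ a) =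
    ENNReal.ofReal l * ((∫⁻ r : ℝ, ENNReal.ofReal (QQ g c y l Y 1 r) ^ p) +
      ∫⁻ r : ℝ, ENNReal.ofReal (QQ g c y l Y (-1) r) ^ p) := by
  have key : ∀ σ : ℝ, |σ| = 1 → (∫⁻ x in Set.Ioi (0:ℝ),
      (‖g (((σ * x : ℝ) : ℂ) + (y : ℂ) * Complex.I)‖₊ : ℝ≥0∞) ^ p * ENNReal.ofReal (|σ * x| ^ a))
      = ENNReal.ofReal l * ∫⁻ r : ℝ, ENNReal.ofReal (QQ g c y l Y σ r) ^ p := by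
    intro σ hσ
    rw [subst_half l Y hl hY, ← lintegral_const_mul' _ _ ENNReal.ofReal_ne_top]
    congr 1; ext r
    have hx : 0 < Y * Real.exp (l * r) := by positivity
    unfold QQ
    generalize Y * Real.exp (l * r) = x at hx ⊢
    rw [abs_mul, hσ, one_mul, abs_of_pos hx, ENNReal.ofReal_mul hl.le,
      ENNReal.ofReal_mul (norm_nonneg _), ENNReal.mul_rpow_of_nonneg _ _ hp.le,
      ENNReal.ofReal_rpow_of_nonneg (Real.rpow_nonneg hx.le _) hp.le, ← Real.rpow_mul hx.le, hc,
      Real.rpow_add_one hx.ne', ENNReal.ofReal_mul (Real.rpow_nonneg hx.le a), ofReal_norm,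
      ← enorm_eq_nnnorm]
    ring
  rw [split_real]
  have h1 := key 1 (by simp)
  have h2 := key (-1) (by simp)
  rw [mul_add, ← h1, ← h2]
  simp

/-- test function -/
noncomputable def fT (s : ℂ) (z : ℂ) : ℂ := Complex.exp (-s * Complex.log (1 - Complex.I * z))

lemma norm_exp_log_le (c ξ : ℝ) (w : ℂ) (hw : w ≠ 0) :
    ‖Complex.exp (-((c:ℂ) - ξ * Complex.I) * Complex.log w)‖ ≤
      Real.exp (Real.pi * |ξ|) * ‖w‖ ^ (-c) := by
  rw [Complex.norm_exp, Real.rpow_def_of_pos (norm_pos_iff.2 hw), ← Real.exp_add]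
  apply Real.exp_le_exp.2
  simp [Complex.log_re, Complex.log_im]
  have h1 : |ξ * w.arg| ≤ |ξ| * Real.pi := by
    rw [abs_mul]; exact mul_le_mul_of_nonneg_left (Complex.abs_arg_le_pi w) (abs_nonneg _)
  have := neg_abs_le (ξ * w.arg)
  linarith

lemma fT_diff (s : ℂ) : DifferentiableOn ℂ (fT s) {z : ℂ | 0 < z.im} := by
  intro z hz
  refine DifferentiableAt.differentiableWithinAt ?_
  have : 1 - Complex.I * z ∈ Complex.slitPlane := by
    left; simp at hz ⊢; linarith
  unfold fT
  fun_prop (disch := assumption)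

lemma fT_meas (s : ℂ) : Measurable (fT s) := by
  unfold fT
  fun_prop


lemma exp_abs_fin (m : ℝ) (hm : 0 < m) :
    ∫⁻ r : ℝ, ENNReal.ofReal (Real.exp (-m * |r|)) ≠ ⊤ := by
  have h : ∫⁻ r in Set.Ioi (0:ℝ), ENNReal.ofReal (Real.exp (-m * |r|)) ≠ ⊤ := by
    have h2 : ∫⁻ r in Set.Ioi (0:ℝ), ENNReal.ofReal (Real.exp (-m * |r|)) =
        ∫⁻ r in Set.Ioi (0:ℝ), ENNReal.ofReal (Real.exp (-m * r)) := by
      refine setLIntegral_congr_fun measurableSet_Ioi (fun r hr => ?_)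
      simp only [abs_of_pos (Set.mem_Ioi.1 hr)]
    rw [h2]
    exact (exp_neg_integrableOn_Ioi 0 hm).lintegral_lt_top.ne
  rw [split_real]
  simp only [abs_neg]
  exact ENNReal.add_ne_top.2 ⟨h, h⟩

lemma exp_log_mul (s w : ℂ) (R : ℝ) (hR : 0 < R) (hw : w ≠ 0) :
    Complex.exp (-s * Complex.log (R * w)) =
      Complex.exp (-s * (Real.log R : ℝ)) * Complex.exp (-s * Complex.log w) := by
  rw [Complex.log_ofReal_mul hR hw, mul_add, Complex.exp_add]

/-- the exponent -/
noncomputable def sE (c ξ l : ℝ) : ℂ := ((c + 1 / l : ℝ) : ℂ) - ξ * Complex.I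

lemma norm_exp_real (c ξ l L : ℝ) :
    ‖Complex.exp (-sE c ξ l * (L : ℝ))‖ = Real.exp (-(c + 1 / l) * L) := by
  rw [Complex.norm_exp]; simp [sE]

lemma sub_ne (q σ : ℝ) (hσ : |σ| = 1) : ((q : ℂ) - Complex.I * σ) ≠ 0 := by
  intro h
  have := congrArg Complex.im h
  simp at this
  simp [this] at hσ

lemma sub_norm (q σ : ℝ) (hσ : |σ| = 1) : 1 ≤ ‖((q : ℂ) - Complex.I * σ)‖ := by
  have := Complex.abs_im_le_norm ((q : ℂ) - Complex.I * σ)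
  simp at this
  linarith

/-- the limiting factor -/
noncomputable def bb (c ξ l σ r : ℝ) : ℝ :=
  Real.exp (l * r * c) *
    ‖Complex.exp (-sE c ξ l * Complex.log (1 - Complex.I * ((σ * Real.exp (l * r) : ℝ) : ℂ)))‖

lemma one_sub_ne (x : ℝ) : (1 - Complex.I * (x : ℂ)) ≠ 0 := by
  intro h
  have := congrArg Complex.re h
  simp at this

lemma one_sub_norm (x : ℝ) : 1 ≤ ‖(1 - Complex.I * (x : ℂ))‖ := by
  have := Complex.abs_re_le_norm (1 - Complex.I * (x : ℂ))
  simpa using this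

lemma QQ_le (c ξ y l σ r : ℝ) (hl : 0 < l) (hy : 0 < y) :
    QQ (fT (sE c ξ l)) c y l (1 + y) σ r ≤ bb c ξ l σ r := by
  have hY : 0 < 1 + y := by linarith
  have h1 : 1 - Complex.I * (((σ * ((1 + y) * Real.exp (l * r)) : ℝ) : ℂ) + (y : ℂ) * Complex.I)
      = ((1 + y : ℝ) : ℂ) * (1 - Complex.I * ((σ * Real.exp (l * r) : ℝ) : ℂ)) := by
    push_cast
    linear_combination (-(y:ℂ)) * Complex.I_sq
  unfold QQ bb fT
  rw [h1, exp_log_mul _ _ _ hY (one_sub_ne _), norm_mul, norm_exp_real,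
    Real.mul_rpow hY.le (Real.exp_pos _).le, ← Real.exp_mul]
  have h2 : Real.exp (-(c + 1 / l) * Real.log (1 + y)) * (1 + y) ^ c ≤ 1 := by
    rw [Real.rpow_def_of_pos hY, ← Real.exp_add, Real.exp_le_one_iff]
    have : 0 ≤ 1 / l * Real.log (1 + y) :=
      mul_nonneg (by positivity) (Real.log_nonneg (by linarith))
    linarith
  have h3 := mul_le_mul_of_nonneg_right h2 (mul_nonneg (Real.exp_pos (l * r * c)).le (norm_nonneg
    (Complex.exp (-sE c ξ l * Complex.log (1 - Complex.I * ((σ * Real.exp (l * r) : ℝ) : ℂ))))))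
  linarith

lemma bb_pos_eq (c ξ l σ r : ℝ) (hl : 0 < l) (hσ : |σ| = 1) :
    bb c ξ l σ r = Real.exp (-r) *
      ‖Complex.exp (-sE c ξ l * Complex.log ((Real.exp (-(l * r)) : ℝ) - Complex.I * σ))‖ := by
  have h1 : 1 - Complex.I * ((σ * Real.exp (l * r) : ℝ) : ℂ) =
      (Real.exp (l * r) : ℝ) * ((Real.exp (-(l * r)) : ℝ) - Complex.I * σ) := by
    rw [mul_sub, ← Complex.ofReal_mul, ← Real.exp_add]
    push_cast
    simp
    ring
  unfold bb
  rw [h1, exp_log_mul _ _ _ (Real.exp_pos _) (sub_ne _ _ hσ), norm_mul, norm_exp_real, ← mul_assoc,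
    ← Real.exp_add, Real.log_exp]
  congr 2
  field_simp
  ring

lemma exp_le_of_norm (c ξ l : ℝ) (w : ℂ) (hc : 0 < c) (hl : 0 < l) (hw : 1 ≤ ‖w‖) :
    ‖Complex.exp (-sE c ξ l * Complex.log w)‖ ≤ Real.exp (Real.pi * |ξ|) := by
  have h0 : w ≠ 0 := by rintro rfl; simp at hw; linarith
  refine (norm_exp_log_le (c + 1 / l) ξ w h0).trans ?_
  have := Real.rpow_le_one_of_one_le_of_nonpos hw (show -(c + 1 / l) ≤ 0 by
    have : 0 < 1 / l := by positivity
    linarith)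
  exact mul_le_of_le_one_right (Real.exp_pos _).le this

lemma bb_bound (c ξ l σ r : ℝ) (hc : 0 < c) (hl : 1 ≤ l) (hσ : |σ| = 1) :
    bb c ξ l σ r ≤ Real.exp (Real.pi * |ξ|) * Real.exp (-(min 1 c) * |r|) := by
  have hl0 : 0 < l := by linarith
  rcases le_or_gt r 0 with hr | hr
  · unfold bb
    rw [mul_comm]
    refine mul_le_mul (exp_le_of_norm c ξ l _ hc hl0 (one_sub_norm _)) ?_ (Real.exp_pos _).le
      (Real.exp_pos _).le
    apply Real.exp_le_exp.2
    rw [abs_of_nonpos hr]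
    have h1 : min 1 c * r ≥ c * r := mul_le_mul_of_nonpos_right (min_le_right _ _) hr
    have h2 : (l - 1) * (r * c) ≤ 0 :=
      mul_nonpos_of_nonneg_of_nonpos (by linarith) (mul_nonpos_of_nonpos_of_nonneg hr hc.le)
    nlinarith
  · rw [bb_pos_eq c ξ l σ r hl0 hσ, mul_comm]
    refine mul_le_mul (exp_le_of_norm c ξ l _ hc hl0 (sub_norm _ _ hσ)) ?_ (Real.exp_pos _).le
      (Real.exp_pos _).le
    apply Real.exp_le_exp.2
    rw [abs_of_pos hr]
    have h1 : min 1 c * r ≤ 1 * r := mul_le_mul_of_nonneg_right (min_le_left _ _) hr.le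
    linarith

open Filter Topology

lemma sE_tendsto (c ξ : ℝ) : Tendsto (fun n : ℕ => sE c ξ ((n : ℝ) + 1)) atTop
    (𝓝 ((c : ℂ) - ξ * Complex.I)) := by
  have h := tendsto_one_div_add_atTop_nhds_zero_nat (𝕜 := ℝ)
  have h2 : Tendsto (fun n : ℕ => ((c + 1 / ((n : ℝ) + 1) : ℝ) : ℂ)) atTop (𝓝 ((c + 0 : ℝ) : ℂ)) :=
    (Complex.continuous_ofReal.tendsto _).comp (h.const_add c)
  rw [add_zero] at h2
  exact h2.sub_const _

lemma exp_lim (c ξ σ : ℝ) (hσ : |σ| = 1) (q : ℕ → ℝ) (hq : Tendsto q atTop (𝓝 0)) :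
    Tendsto (fun n : ℕ => Complex.exp (-sE c ξ ((n : ℝ) + 1) *
      Complex.log ((q n : ℝ) - Complex.I * σ))) atTop
      (𝓝 (Complex.exp (-((c : ℂ) - ξ * Complex.I) * Complex.log (-(Complex.I * σ))))) := by
  refine (Complex.continuous_exp.tendsto _).comp ?_
  refine (sE_tendsto c ξ).neg.mul ?_
  have h1 : Tendsto (fun n => ((q n : ℂ) - Complex.I * σ)) atTop (𝓝 (-(Complex.I * σ))) := by
    have := ((Complex.continuous_ofReal.tendsto _).comp hq).sub_const (Complex.I * σ)
    simpa using this
  refine h1.clog ?_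
  right
  simp
  rintro rfl
  simp at hσ

lemma exp_neg_lim (r : ℝ) (hr : 0 < r) :
    Tendsto (fun n : ℕ => Real.exp (-(((n : ℝ) + 1) * r))) atTop (𝓝 0) := by
  apply Real.tendsto_exp_neg_atTop_nhds_zero.comp
  exact (tendsto_atTop_add_const_right _ _ tendsto_natCast_atTop_atTop).atTop_mul_const hr

/-- limit density -/
noncomputable def AA (c ξ σ r : ℝ) : ℝ :=
  if 0 < r then Real.exp (-r) *
    ‖Complex.exp (-((c : ℂ) - ξ * Complex.I) * Complex.log (-(Complex.I * σ)))‖ else 0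

lemma bb_lim (c ξ σ r : ℝ) (hc : 0 < c) (hσ : |σ| = 1) (hr : r ≠ 0) :
    Tendsto (fun n : ℕ => bb c ξ ((n : ℝ) + 1) σ r) atTop (𝓝 (AA c ξ σ r)) := by
  rcases lt_or_gt_of_ne hr with h | h
  · rw [AA, if_neg (not_lt.2 h.le)]
    have h1 := exp_neg_lim (-(r * c)) (by nlinarith)
    have h2 := h1.mul_const (Real.exp (Real.pi * |ξ|))
    rw [zero_mul] at h2
    refine squeeze_zero (fun n => by unfold bb; positivity) (fun n => ?_) h2
    unfold bb
    have : -(((n:ℝ) + 1) * -(r * c)) = ((n:ℝ) + 1) * r * c := by ring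
    rw [this]
    exact mul_le_mul_of_nonneg_left (exp_le_of_norm c ξ _ _ hc (by positivity) (one_sub_norm _))
      (Real.exp_pos _).le
  · rw [AA, if_pos h]
    have : ∀ n : ℕ, bb c ξ ((n : ℝ) + 1) σ r = _ := fun n =>
      bb_pos_eq c ξ ((n : ℝ) + 1) σ r (by positivity) hσ
    simp_rw [this]
    exact (exp_lim c ξ σ hσ _ (exp_neg_lim r h)).norm.const_mul _

lemma bb_meas (c ξ l σ : ℝ) : Measurable (bb c ξ l σ) := by
  unfold bb
  fun_prop

lemma bound_fin (p c ξ : ℝ) (hp : 0 < p) (hc : 0 < c) :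
    ∫⁻ r : ℝ, ENNReal.ofReal (Real.exp (Real.pi * |ξ|) * Real.exp (-(min 1 c) * |r|)) ^ p ≠ ⊤ := by
  have : ∀ r : ℝ, ENNReal.ofReal (Real.exp (Real.pi * |ξ|) * Real.exp (-(min 1 c) * |r|)) ^ p =
      ENNReal.ofReal (Real.exp (Real.pi * |ξ| * p)) *
        ENNReal.ofReal (Real.exp (-(min 1 c * p) * |r|)) := by
    intro r
    rw [ENNReal.ofReal_rpow_of_nonneg (by positivity) hp.le, Real.mul_rpow (by positivity)
      (by positivity), ENNReal.ofReal_mul (by positivity), ← Real.exp_mul, ← Real.exp_mul]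
    congr 3
    ring
  simp_rw [this]
  rw [lintegral_const_mul' _ _ ENNReal.ofReal_ne_top]
  exact ENNReal.mul_ne_top ENNReal.ofReal_ne_top (exp_abs_fin _ (by positivity))

lemma J_lim (p c ξ σ : ℝ) (hp : 0 < p) (hc : 0 < c) (hσ : |σ| = 1) :
    Tendsto (fun n : ℕ => ∫⁻ r : ℝ, ENNReal.ofReal (bb c ξ ((n : ℝ) + 1) σ r) ^ p) atTop
      (𝓝 (∫⁻ r : ℝ, ENNReal.ofReal (AA c ξ σ r) ^ p)) := by
  refine tendsto_lintegral_of_dominated_convergence _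
    (fun n => (bb_meas c ξ _ σ).ennreal_ofReal.pow_const p) (fun n => ae_of_all _ fun r => ?_)
    (bound_fin p c ξ hp hc) ?_
  · exact ENNReal.rpow_le_rpow (ENNReal.ofReal_le_ofReal
      (bb_bound c ξ _ σ r hc (by linarith [n.cast_nonneg (α := ℝ)]) hσ)) hp.le
  · have : ∀ᵐ r : ℝ, r ≠ 0 := by simp [ae_iff]
    filter_upwards [this] with r hr
    exact ((ENNReal.continuous_rpow_const.tendsto _).comp
      (ENNReal.tendsto_ofReal (bb_lim c ξ σ r hc hσ hr)))

lemma J_fin (p c ξ l σ : ℝ) (hp : 0 < p) (hc : 0 < c) (hl : 1 ≤ l) (hσ : |σ| = 1) :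
    ∫⁻ r : ℝ, ENNReal.ofReal (bb c ξ l σ r) ^ p ≠ ⊤ := by
  refine ne_top_of_le_ne_top (bound_fin p c ξ hp hc) (lintegral_mono fun r => ?_)
  exact ENNReal.rpow_le_rpow (ENNReal.ofReal_le_ofReal (bb_bound c ξ _ σ r hc hl hσ)) hp.le

lemma AA_le (c ξ σ r : ℝ) (hc : 0 < c) (hσ : |σ| = 1) :
    AA c ξ σ r ≤ Real.exp (Real.pi * |ξ|) * Real.exp (-(min 1 c) * |r|) := by
  by_cases hr : r = 0
  · subst hr; simp [AA]; positivity
  · exact le_of_tendsto' (bb_lim c ξ σ r hc hσ hr)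
      (fun n => bb_bound c ξ _ σ r hc (by linarith [n.cast_nonneg (α := ℝ)]) hσ)

lemma AA_meas (c ξ σ : ℝ) : Measurable (AA c ξ σ) := by
  unfold AA
  exact Measurable.ite measurableSet_Ioi (by fun_prop) (by fun_prop)

lemma AA_fin (p c ξ σ : ℝ) (hp : 0 < p) (hc : 0 < c) (hσ : |σ| = 1) :
    ∫⁻ r : ℝ, ENNReal.ofReal (AA c ξ σ r) ^ p ≠ ⊤ := by
  refine ne_top_of_le_ne_top (bound_fin p c ξ hp hc) (lintegral_mono fun r => ?_)
  exact ENNReal.rpow_le_rpow (ENNReal.ofReal_le_ofReal (AA_le c ξ σ r hc hσ)) hp.le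

lemma AA_ne (p c ξ σ : ℝ) (hp : 0 < p) :
    ∫⁻ r : ℝ, ENNReal.ofReal (AA c ξ σ r) ^ p ≠ 0 := by
  rw [Ne, lintegral_eq_zero_iff ((AA_meas c ξ σ).ennreal_ofReal.pow_const p)]
  intro h
  have h1 : ∀ᵐ r : ℝ, ¬ (0 < r) := by
    filter_upwards [h] with r hr h0
    simp only [Pi.zero_apply, ENNReal.rpow_eq_zero_iff_of_pos hp, ENNReal.ofReal_eq_zero, AA,
      if_pos h0] at hr
    exact absurd hr (not_le.2 (mul_pos (Real.exp_pos _) (norm_pos_iff.2 (Complex.exp_ne_zero _))))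
  rw [ae_iff] at h1
  simp only [not_not] at h1
  change volume (Set.Ioi (0:ℝ)) = 0 at h1
  simp at h1

lemma H_meas_s11 (φ : ℝ → ℂ) (hφm : Measurable φ) (s : ℂ) : Measurable (HphiHol φ (fT s)) := by
  unfold HphiHol
  refine StronglyMeasurable.measurable ?_
  refine StronglyMeasurable.integral_prod_right
    (f := fun (z : ℂ) (t : ℝ) => fT s (z / (t : ℂ)) * φ t / (t : ℂ)) ?_
  refine Measurable.stronglyMeasurable ?_
  have := fT_meas s
  simp only [Function.uncurry_def]
  fun_prop

lemma w_eq (l σ r t : ℝ) (ht : 0 < t) :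
    1 - Complex.I * ((((σ * (1 * Real.exp (l * r)) : ℝ) : ℂ) + ((1 : ℝ) : ℂ) * Complex.I) / (t : ℂ))
      = ((Real.exp (l * r) / t : ℝ) : ℂ) *
        (((1 + t) * Real.exp (-(l * r)) : ℝ) - Complex.I * σ) := by
  have ht' : (t : ℂ) ≠ 0 := by exact_mod_cast ht.ne'
  have he : (Real.exp (l * r) : ℂ) * (Real.exp (-(l * r)) : ℂ) = 1 := by
    rw [← Complex.ofReal_mul, ← Real.exp_add]; simp
  push_cast only [Complex.ofReal_mul, Complex.ofReal_add, Complex.ofReal_div, Complex.ofReal_one]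
  field_simp
  linear_combination (-(1:ℂ)) * Complex.I_sq - (1 + (t:ℂ)) * he

lemma pw (c ξ l σ r t : ℝ) (hl : 0 < l) (hσ : |σ| = 1) (ht : 0 < t) :
    Complex.exp (((c : ℂ) - ξ * Complex.I) * ((l * r : ℝ) : ℂ)) * fT (sE c ξ l)
      ((((σ * (1 * Real.exp (l * r)) : ℝ) : ℂ) + ((1 : ℝ) : ℂ) * Complex.I) / (t : ℂ)) =
    Complex.exp (((-r : ℝ) : ℂ)) * Complex.exp (sE c ξ l * ((Real.log t : ℝ) : ℂ)) *
      Complex.exp (-sE c ξ l *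
        Complex.log (((1 + t) * Real.exp (-(l * r)) : ℝ) - Complex.I * σ)) := by
  unfold fT
  rw [w_eq l σ r t ht, exp_log_mul _ _ _ (by positivity) (sub_ne _ _ hσ), ← mul_assoc,
    ← Complex.exp_add, ← Complex.exp_add, ← Complex.exp_add, ← Complex.exp_add,
    Real.log_div (Real.exp_pos _).ne' ht.ne', Real.log_exp]
  congr 1
  generalize Complex.log (((1 + t) * Real.exp (-(l * r)) : ℝ) - Complex.I * σ) = W
  have : (l : ℂ) ≠ 0 := by exact_mod_cast hl.ne'
  unfold sE
  push_cast
  field_simp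
  ring

lemma pw_bound (c ξ l σ r t : ℝ) (hc : 0 < c) (hl : 0 < l) (hσ : |σ| = 1) (ht : 0 < t) :
    ‖Complex.exp (((c : ℂ) - ξ * Complex.I) * ((l * r : ℝ) : ℂ)) * fT (sE c ξ l)
      ((((σ * (1 * Real.exp (l * r)) : ℝ) : ℂ) + ((1 : ℝ) : ℂ) * Complex.I) / (t : ℂ))‖ ≤
    Real.exp (Real.pi * |ξ|) * t ^ c := by
  have h1 := w_eq l σ r t ht
  unfold fT
  set w := 1 - Complex.I * ((((σ * (1 * Real.exp (l * r)) : ℝ) : ℂ) +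
    ((1 : ℝ) : ℂ) * Complex.I) / (t : ℂ)) with hw
  have hR : 0 < Real.exp (l * r) / t := by positivity
  have h2 : Real.exp (l * r) / t ≤ ‖w‖ := by
    rw [h1, norm_mul, Complex.norm_real, Real.norm_of_nonneg hR.le]
    exact le_mul_of_one_le_right hR.le (sub_norm _ _ hσ)
  have h3 : 1 ≤ ‖w‖ := by
    refine le_trans ?_ (Complex.re_le_norm w)
    have hI : (Complex.I * (σ : ℂ)).re = 0 := by simp
    rw [h1, Complex.re_ofReal_mul, Complex.sub_re, Complex.ofReal_re, hI, Real.exp_neg]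
    field_simp
    linarith
  have h0 : w ≠ 0 := norm_pos_iff.1 (by linarith)
  have h4 := norm_exp_log_le (c + 1 / l) ξ w h0
  have h5 : ‖w‖ ^ (-(c + 1 / l)) ≤ (Real.exp (l * r) / t) ^ (-c) := by
    refine (Real.rpow_le_rpow_of_exponent_le h3 (show -(c + 1 / l) ≤ -c by
      have : 0 < 1 / l := by positivity
      linarith)).trans ?_
    exact Real.rpow_le_rpow_of_nonpos hR h2 (by linarith)
  have h6 : ‖Complex.exp (((c : ℂ) - ξ * Complex.I) * ((l * r : ℝ) : ℂ))‖
      = Real.exp (l * r) ^ c := by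
    rw [Complex.norm_exp, ← Real.exp_mul]
    simp
    ring
  rw [norm_mul, h6]
  calc Real.exp (l * r) ^ c * ‖Complex.exp (-sE c ξ l * Complex.log w)‖
      ≤ Real.exp (l * r) ^ c * (Real.exp (Real.pi * |ξ|) * (Real.exp (l * r) / t) ^ (-c)) := by
        refine mul_le_mul_of_nonneg_left (h4.trans ?_) (by positivity)
        exact mul_le_mul_of_nonneg_left h5 (Real.exp_pos _).le
    _ = _ := by
        rw [Real.rpow_neg hR.le, Real.div_rpow (Real.exp_pos _).le ht.le]
        have : Real.exp (l * r) ^ c ≠ 0 := by positivity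
        have : t ^ c ≠ 0 := by positivity
        field_simp

lemma F_lim (φ : ℝ → ℂ) (hφm : Measurable φ) (c ξ σ r : ℝ) (hc : 0 < c) (hσ : |σ| = 1)
    (hφ : IntegrableOn (fun t => ‖φ t‖ * t ^ (c - 1)) (Set.Ioi (0 : ℝ))) (hr : 0 < r) :
    Tendsto (fun n : ℕ => QQ (HphiHol φ (fT (sE c ξ ((n : ℝ) + 1)))) c 1 ((n : ℝ) + 1) 1 σ r) atTop
      (𝓝 (AA c ξ σ r * ‖khat φ c ξ‖)) := by
  set B := Complex.exp (-((c : ℂ) - ξ * Complex.I) * Complex.log (-(Complex.I * σ))) with hB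
  have hlim : Tendsto (fun n : ℕ => ∫ t in Set.Ioi (0:ℝ),
      Complex.exp (((c : ℂ) - ξ * Complex.I) * ((((n : ℝ) + 1) * r : ℝ) : ℂ)) *
      (fT (sE c ξ ((n : ℝ) + 1))
      ((((σ * (1 * Real.exp (((n : ℝ) + 1) * r)) : ℝ) : ℂ) + ((1 : ℝ) : ℂ) * Complex.I) / (t : ℂ))
        * φ t / t)) atTop
      (𝓝 (∫ t in Set.Ioi (0:ℝ), (Complex.exp (((-r : ℝ) : ℂ)) * B) *
        (φ t * (t : ℂ) ^ ((c : ℂ) - 1 - Complex.I * (ξ : ℂ))))) := by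
    refine tendsto_integral_of_dominated_convergence
      (fun t => Real.exp (Real.pi * |ξ|) * (‖φ t‖ * t ^ (c - 1))) (fun n => ?_) (hφ.const_mul _)
      (fun n => ?_) ?_
    · have := fT_meas (sE c ξ ((n : ℝ) + 1))
      refine Measurable.aestronglyMeasurable ?_
      fun_prop
    · filter_upwards [ae_restrict_mem measurableSet_Ioi] with t ht
      have ht : 0 < t := ht
      rw [mul_div_assoc, ← mul_assoc, norm_mul]
      have h := pw_bound c ξ ((n : ℝ) + 1) σ r t hc (by positivity) hσ ht
      refine (mul_le_mul_of_nonneg_right h (norm_nonneg _)).trans_eq ?_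
      rw [norm_div, Complex.norm_real, Real.norm_of_nonneg ht.le, Real.rpow_sub_one ht.ne']
      ring
    · filter_upwards [ae_restrict_mem measurableSet_Ioi] with t ht
      have ht : 0 < t := ht
      have hpw : ∀ n : ℕ, _ := fun n => pw c ξ ((n : ℝ) + 1) σ r t (by positivity) hσ ht
      simp_rw [mul_div_assoc, ← mul_assoc _ _ (φ t / (t : ℂ)), hpw]
      have hq : Tendsto (fun n : ℕ => (1 + t) * Real.exp (-(((n : ℝ) + 1) * r))) atTop (𝓝 0) := by
        simpa using (exp_neg_lim r hr).const_mul (1 + t)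
      have h1 := exp_lim c ξ σ hσ _ hq
      have h2 : Tendsto (fun n : ℕ => Complex.exp (sE c ξ ((n:ℝ) + 1) * ((Real.log t : ℝ) : ℂ)))
          atTop (𝓝 (Complex.exp (((c : ℂ) - ξ * Complex.I) * ((Real.log t : ℝ) : ℂ)))) :=
        (Complex.continuous_exp.tendsto _).comp ((sE_tendsto c ξ).mul_const _)
      have h3 := (((h2.const_mul (Complex.exp (((-r : ℝ) : ℂ)))).mul h1).mul_const (φ t / (t : ℂ)))
      convert h3 using 2
      have ht' : (t : ℂ) ≠ 0 := by exact_mod_cast ht.ne'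
      have : (t : ℂ) ^ ((c : ℂ) - 1 - Complex.I * (ξ : ℂ)) =
          Complex.exp (((c : ℂ) - ξ * Complex.I) * ((Real.log t : ℝ) : ℂ)) / t := by
        have e : (c : ℂ) - 1 - Complex.I * (ξ : ℂ) = ((c : ℂ) - ξ * Complex.I) - 1 := by ring
        rw [e, Complex.cpow_sub _ _ ht', Complex.cpow_one, Complex.cpow_def_of_ne_zero ht',
          Complex.ofReal_log ht.le]
        congr 2
        ring
      rw [this, ← hB]
      ring
  rw [integral_const_mul] at hlim
  have h := hlim.norm
  have e1 : ‖Complex.exp (((-r : ℝ) : ℂ)) * B * ∫ t in Set.Ioi (0:ℝ),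
      (φ t * (t : ℂ) ^ ((c : ℂ) - 1 - Complex.I * (ξ : ℂ)))‖ = AA c ξ σ r * ‖khat φ c ξ‖ := by
    rw [norm_mul, norm_mul, AA, if_pos hr, khat, ← hB, Complex.norm_exp]
    simp
  rw [e1] at h
  refine h.congr (fun n => ?_)
  rw [integral_const_mul, norm_mul]
  unfold QQ HphiHol
  rw [mul_comm, Complex.norm_exp, one_mul (Real.exp _), ← Real.exp_mul]
  congr 2
  simp
  ring

/-- If `C ≥ 0` satisfies `‖ℋ_φ f‖ ≤ C ‖f‖` for every holomorphic `f` on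
`𝕌` of finite weighted Hardy norm, then `sup_{ξ ∈ ℝ} |k̂_{a,p}(ξ)| ≤ C`. -/
theorem stmt11 (p a : ℝ) (hp : 1 ≤ p) (ha : -1 < a) (φ : ℝ → ℂ) (hφm : Measurable φ)
    (hφ : IntegrableOn (fun t => ‖φ t‖ * t ^ ((a + 1) / p - 1)) (Set.Ioi (0 : ℝ)))
    (C : ℝ) (hC : 0 ≤ C)
    (hbound : ∀ f : ℂ → ℂ, DifferentiableOn ℂ f upperHalf → hardyNorm p a f < ⊤ →
      hardyNorm p a (HphiHol φ f) ≤ ENNReal.ofReal C * hardyNorm p a f) :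
    ∀ ξ : ℝ, ‖khat φ ((a + 1) / p) ξ‖ ≤ C := by
  
  intro ξ
  have hp0 : 0 < p := by linarith
  set c := (a + 1) / p with hcdef
  have hc : 0 < c := div_pos (by linarith) hp0
  have hcp : c * p = a + 1 := by rw [hcdef]; field_simp
  have s1 : |(1:ℝ)| = 1 := by simp
  have s2 : |(-1:ℝ)| = 1 := by simp
  set k := khat φ c ξ
  set J : ℕ → ℝ → ℝ≥0∞ := fun n σ => ∫⁻ r : ℝ, ENNReal.ofReal (bb c ξ ((n : ℝ) + 1) σ r) ^ p
    with hJ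
  set S : ℝ → ℝ≥0∞ := fun σ => ∫⁻ r : ℝ, ENNReal.ofReal (AA c ξ σ r) ^ p with hS
  set D : ℕ → ℝ → ℝ → ℝ≥0∞ := fun n σ r => ENNReal.ofReal
    (QQ (HphiHol φ (fT (sE c ξ ((n : ℝ) + 1)))) c 1 ((n : ℝ) + 1) 1 σ r) ^ p with hD
  have hDm : ∀ n σ, Measurable (D n σ) := by
    intro n σ
    have := H_meas_s11 φ hφm (sE c ξ ((n : ℝ) + 1))
    simp only [hD]
    unfold QQ
    fun_prop
  have hup : ∀ n : ℕ, hardyNorm p a (fT (sE c ξ ((n : ℝ) + 1))) ^ p ≤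
      ENNReal.ofReal ((n : ℝ) + 1) * (J n 1 + J n (-1)) := by
    intro n
    rw [← ENNReal.le_rpow_inv_iff hp0]
    unfold hardyNorm
    refine iSup₂_le fun y hy => ?_
    have hy : 0 < y := hy
    rw [one_div]
    refine ENNReal.rpow_le_rpow ?_ (by positivity)
    rw [norm_subst _ p a c y ((n : ℝ) + 1) (1 + y) hp0 hcp (by positivity) (by positivity)]
    refine mul_le_mul_right (add_le_add ?_ ?_) _ <;>
    · refine lintegral_mono fun r => ?_
      exact ENNReal.rpow_le_rpow (ENNReal.ofReal_le_ofReal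
        (QQ_le c ξ y _ _ r (by positivity) hy)) hp0.le
  have hlow : ∀ n : ℕ, ENNReal.ofReal ((n : ℝ) + 1) * ∫⁻ r, (D n 1 r + D n (-1) r) ≤
      hardyNorm p a (HphiHol φ (fT (sE c ξ ((n : ℝ) + 1)))) ^ p := by
    intro n
    rw [← ENNReal.rpow_inv_le_iff hp0, lintegral_add_left (hDm n 1),
      ← norm_subst _ p a c 1 ((n : ℝ) + 1) 1 hp0 hcp (by positivity) one_pos, ← one_div]
    unfold hardyNorm
    exact le_iSup₂_of_le 1 (Set.mem_Ioi.2 one_pos) le_rfl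
  have hmain : ∀ n : ℕ, ∫⁻ r, (D n 1 r + D n (-1) r) ≤
      ENNReal.ofReal C ^ p * (J n 1 + J n (-1)) := by
    intro n
    have hl1 : (1:ℝ) ≤ (n:ℝ) + 1 := by linarith [n.cast_nonneg (α := ℝ)]
    have hfin : hardyNorm p a (fT (sE c ξ ((n : ℝ) + 1))) < ⊤ := by
      rw [← ENNReal.rpow_lt_top_iff_of_pos hp0]
      refine (hup n).trans_lt (ENNReal.mul_lt_top ENNReal.ofReal_lt_top
        (ENNReal.add_lt_top.2 ⟨?_, ?_⟩))
      · exact (J_fin p c ξ _ 1 hp0 hc hl1 s1).lt_top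
      · exact (J_fin p c ξ _ (-1) hp0 hc hl1 s2).lt_top
    have h := hbound _ (fT_diff (sE c ξ ((n : ℝ) + 1))) hfin
    have h2 := (hlow n).trans (ENNReal.rpow_le_rpow h hp0.le)
    rw [ENNReal.mul_rpow_of_nonneg _ _ hp0.le] at h2
    have h3 := h2.trans (mul_le_mul_right (hup n) _)
    rw [mul_left_comm] at h3
    exact (ENNReal.mul_le_mul_iff_right (by simp; positivity) ENNReal.ofReal_ne_top).1 h3
  have hfat := lintegral_liminf_le (μ := volume) (u := atTop)
    (f := fun n r => D n 1 r + D n (-1) r) (fun n => (hDm n 1).add (hDm n (-1)))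
  have hJl : Tendsto (fun n => ENNReal.ofReal C ^ p * (J n 1 + J n (-1))) atTop
      (𝓝 (ENNReal.ofReal C ^ p * (S 1 + S (-1)))) :=
    ENNReal.Tendsto.const_mul ((J_lim p c ξ 1 hp0 hc s1).add (J_lim p c ξ (-1) hp0 hc s2))
      (Or.inr (ENNReal.rpow_ne_top_of_nonneg hp0.le ENNReal.ofReal_ne_top))
  have hR : liminf (fun n => ∫⁻ r, (D n 1 r + D n (-1) r)) atTop ≤
      ENNReal.ofReal C ^ p * (S 1 + S (-1)) := by
    rw [← hJl.liminf_eq]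
    exact liminf_le_liminf (Eventually.of_forall hmain)
  have hL : (S 1 + S (-1)) * ENNReal.ofReal ‖k‖ ^ p ≤
      ∫⁻ r, liminf (fun n => D n 1 r + D n (-1) r) atTop := by
    have hne : ENNReal.ofReal ‖k‖ ^ p ≠ ⊤ :=
      ENNReal.rpow_ne_top_of_nonneg hp0.le ENNReal.ofReal_ne_top
    simp only [hS]
    rw [← lintegral_add_left ((AA_meas c ξ 1).ennreal_ofReal.pow_const p),
      ← lintegral_mul_const' _ _ hne]
    refine lintegral_mono fun r => ?_
    rcases le_or_gt r 0 with hr | hr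
    · simp [AA, not_lt.2 hr, hp0]
    · have hA : ∀ σ, 0 ≤ AA c ξ σ r := fun σ => by unfold AA; split_ifs <;> positivity
      have ht : ∀ σ : ℝ, |σ| = 1 → Tendsto (fun n => D n σ r) atTop
          (𝓝 (ENNReal.ofReal (AA c ξ σ r) ^ p * ENNReal.ofReal ‖k‖ ^ p)) := by
        intro σ hσ
        rw [← ENNReal.mul_rpow_of_nonneg _ _ hp0.le, ← ENNReal.ofReal_mul (hA σ)]
        exact (ENNReal.continuous_rpow_const.tendsto _).comp
          (ENNReal.tendsto_ofReal (F_lim φ hφm c ξ σ r hc hσ hφ hr))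
      rw [((ht 1 s1).add (ht (-1) s2)).liminf_eq, add_mul]
  have hfinal := (hL.trans hfat).trans hR
  rw [mul_comm] at hfinal
  have hS0 : S 1 + S (-1) ≠ 0 := by
    intro h
    exact AA_ne p c ξ 1 hp0 (add_eq_zero.1 h).1
  have hST : S 1 + S (-1) ≠ ⊤ :=
    ENNReal.add_ne_top.2 ⟨AA_fin p c ξ 1 hp0 hc s1, AA_fin p c ξ (-1) hp0 hc s2⟩
  have h1 := (ENNReal.mul_le_mul_iff_left hS0 hST).1 hfinal
  rw [ENNReal.rpow_le_rpow_iff hp0, ENNReal.ofReal_le_ofReal_iff hC] at h1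
  exact h1
end
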